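/- Let G be a two-edge-connected cubic graph that can be drawn in the plane with exactly one crossing. Then G is three-edge-colourable. -/

import Mathlib

open SimpleGraph

/-- A drawing of a simple graph in the plane: each vertex gets a point, each edge a
continuous injective arc (parametrized on `[0,1]`) joining the images of its two ends,
and arcs pass through vertex points only at their endpoints. -/
structure Drawing {V : Type*} (G : SimpleGraph V) where
  vpos : V → ℝ × ℝ
  vinj : Function.Injective vpos
  arc : G.edgeSet → ℝ → ℝ × ℝ
  cont : ∀ e, ContinuousOn (arc e) (Set.Icc 0 1)
  injOn : ∀ e, Set.InjOn (arc e) (Set.Icc 0 1)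
  ends : ∀ e : G.edgeSet, ∃ u v : V, (e : Sym2 V) = s(u, v) ∧
      arc e 0 = vpos u ∧ arc e 1 = vpos v
  interiorAvoidsVertices : ∀ e : G.edgeSet, ∀ w : V, ∀ t ∈ Set.Ioo (0 : ℝ) 1,
      arc e t ≠ vpos w

/-- The interior of the arc of an edge in a drawing. -/
def Drawing.arcInt {V : Type*} {G : SimpleGraph V} (d : Drawing G) (e : G.edgeSet) :
    Set (ℝ × ℝ) :=
  d.arc e '' Set.Ioo (0 : ℝ) 1

/-- A drawing is planar (crossing-free) if the interiors of the arcs of distinct edges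
are disjoint. -/
def Drawing.IsPlanar {V : Type*} {G : SimpleGraph V} (d : Drawing G) : Prop :=
  ∀ e f : G.edgeSet, e ≠ f → d.arcInt e ∩ d.arcInt f = ∅

/-- A drawing with exactly one crossing: exactly one pair of distinct edges has
intersecting interiors, and those interiors meet in exactly one point. -/
def Drawing.OneCrossing {V : Type*} {G : SimpleGraph V} (d : Drawing G) : Prop :=
  ∃ e f : G.edgeSet, e ≠ f ∧ (∃! p, p ∈ d.arcInt e ∩ d.arcInt f) ∧
    ∀ e' f' : G.edgeSet, e' ≠ f' → ({e', f'} : Set G.edgeSet) ≠ {e, f} →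
      d.arcInt e' ∩ d.arcInt f' = ∅

/-- A graph is planar if it admits a crossing-free drawing in the plane. -/
def IsPlanarGraph {V : Type*} (G : SimpleGraph V) : Prop :=
  ∃ d : Drawing G, d.IsPlanar

/-- A graph is two-edge-connected if it is connected and has no cut-edge (bridge). -/
def TwoEdgeConnected {V : Type*} (G : SimpleGraph V) : Prop :=
  G.Connected ∧ ∀ e ∈ G.edgeSet, ¬ G.IsBridge e

/-- A graph is three-edge-colourable if its edges can be coloured with three colours so
that edges sharing a vertex receive distinct colours. -/
def ThreeEdgeColorable {V : Type*} (G : SimpleGraph V) : Prop :=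
  ∃ c : G.edgeSet → Fin 3, ∀ e f : G.edgeSet, e ≠ f →
    (∃ v : V, v ∈ (e : Sym2 V) ∧ v ∈ (f : Sym2 V)) → c e ≠ c f

/-!
A disc around the crossing that meets the drawing only in the two crossing edges is blown up to the
unit disc. The four half-edges first reach its circle at four points. If the two chords joining the
ends that belong to the same edge are disjoint, they redraw `G` without a crossing. Otherwise the
four points are joined by a 4-circuit inside the disc: this gives a planar cubic two-edge-connected
graph, which the four-colour theorem colours.

Forget the circuit, so that four pendant edges remain. As every vertex of `G` meets all three
colours, the numbers of pendant edges of each colour have the same parity. So if the pendant edges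
coming from one edge of `G` do not agree in colour, then for both edges they are coloured by the
same pair `x`, `y`. In that case the Kempe chains in `x` and `y` cannot join the two ends of each
pair, since such chains would cross outside the disc, which would make them a single path with four
end vertices. An exchange on one chain repairs the colouring at one pair, and by parity also at the
other. Gluing the pendant edges of each pair colours `G`.
-/

/-! ### Crossing curves in a disc -/

section Plane

open Complex

open scoped ComplexConjugate Real

theorem exists_continuous_log {X : Type*} [TopologicalSpace X] [SimplyConnectedSpace X]
    [LocallyPathConnectedSpace X] {f : X → ℂ} (hf : Continuous f) (h0 : ∀ x, f x ≠ 0) :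
    ∃ L : X → ℂ, Continuous L ∧ ∀ x, exp (L x) = f x := by
  let F : C(X, {z : ℂ // z ≠ 0}) := ⟨fun x => ⟨f x, h0 x⟩, by fun_prop⟩
  have x₀ : X := Classical.arbitrary X
  obtain ⟨L, ⟨-, hL⟩, -⟩ := isCoveringMap_exp.existsUnique_continuousMap_lifts F x₀
    (log (f x₀)) (Subtype.ext (exp_log (h0 _)))
  exact ⟨L, L.continuous, fun x => congrArg Subtype.val (congrFun hL x)⟩

theorem im_sub_im_eq_arg_sub_arg {X : Type*} [TopologicalSpace X] [PreconnectedSpace X]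
    {h : X → ℂ} (hh : Continuous h) {u : ℂ} (hu : ∀ t, 0 < (u * exp (h t)).re) (s t : X) :
    (h t).im - (h s).im = (u * exp (h t)).arg - (u * exp (h s)).arg := by
  have hne (t) : u * exp (h t) ≠ 0 := fun h0 => by simpa [h0] using hu t
  have hu0 : u ≠ 0 := left_ne_zero_of_mul (hne s)
  have hlog : Continuous fun t => log (u * exp (h t)) :=
    Continuous.clog (by fun_prop) fun t => Or.inl (hu t)
  have hconst : (fun t => h t - log (u * exp (h t))) = fun _ => h s - log (u * exp (h s)) := by
    refine isCoveringMap_exp.eq_of_comp_eq (hh.sub hlog) continuous_const ?_ s rfl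
    funext t
    refine Subtype.ext ?_
    change exp _ = exp _
    rw [exp_sub, exp_sub, exp_log (hne _), exp_log (hne _)]
    field_simp
  have := congrArg Complex.im (congrFun hconst t)
  simp only [sub_im, log_im] at this
  linarith

theorem exp_mul_I_sub_exp_mul_I (α β : ℝ) :
    exp (β * I) - exp (α * I) =
      (2 * Real.sin ((β - α) / 2) : ℝ) * exp (((α + β + π) / 2 : ℝ) * I) := by
  obtain ⟨x, y, rfl, rfl⟩ : ∃ x y : ℝ, α = x - y ∧ β = x + y :=
    ⟨(α + β) / 2, (β - α) / 2, by ring, by ring⟩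
  have h1 : (x + y - (x - y)) / 2 = y := by ring
  have h2 : (x - y + (x + y) + π) / 2 = x + π / 2 := by ring
  rw [h1, h2]
  push_cast
  simp only [sub_mul, add_mul, exp_add, exp_sub, exp_pi_div_two_mul_I, Complex.sin,
    neg_mul, exp_neg]
  field_simp
  rw [I_sq]
  ring

theorem arg_exp_neg_mul_sub {θ γ : ℝ} (h : γ ∈ Set.Ioo θ (θ + 2 * π)) :
    (exp (-(θ * I)) * (exp (θ * I) - exp (γ * I))).arg = (γ - θ - π) / 2 := by
  have hsin : 0 < Real.sin ((γ - θ) / 2) :=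
    Real.sin_pos_of_pos_of_lt_pi (by linarith [h.1]) (by linarith [h.2])
  have : exp (-(θ * I)) * (exp (θ * I) - exp (γ * I)) =
      (2 * Real.sin ((γ - θ) / 2) : ℝ) * exp (((γ - θ - π) / 2 : ℝ) * I) := by
    rw [← neg_sub, exp_mul_I_sub_exp_mul_I, mul_comm, ← neg_mul, mul_assoc, neg_mul_comm,
      ← mul_neg, ← exp_sub_pi_mul_I, ← exp_add]
    congr 2
    push_cast
    ring
  rw [this, exp_mul_I, arg_mul_cos_add_sin_mul_I (by positivity)]
  constructor <;> linarith [Real.pi_pos, h.1, h.2]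

theorem re_exp_neg_mul_sub_pos {θ : ℝ} {z : ℂ} (hz : ‖z‖ ≤ 1) (hne : exp (θ * I) ≠ z) :
    0 < (exp (-(θ * I)) * (exp (θ * I) - z)).re := by
  set w := exp (-(θ * I)) * z with hw
  have hwn : ‖w‖ ≤ 1 := by
    rw [hw, norm_mul, ← neg_mul, ← ofReal_neg, norm_exp_ofReal_mul_I, one_mul]
    exact hz
  have hw1 : w ≠ 1 := by
    rwa [hw, exp_neg, Ne, inv_mul_eq_one₀ (exp_ne_zero _)]
  rw [mul_sub, ← exp_add, neg_add_cancel, exp_zero, ← hw, sub_re, one_re, sub_pos]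
  refine ((re_le_norm w).trans hwn).lt_of_ne fun hre => hw1 ?_
  have hnonneg := Complex.re_eq_norm.1 (le_antisymm (re_le_norm w) (hre ▸ hwn))
  exact Complex.ext hre (Complex.le_def.1 hnonneg).2.symm

/-- A version of the inscribed angle theorem: seen from a point of the circle, a curve in the disc
turns by half the angle between its end points. -/
theorem im_sub_im_eq_half_angle {X : Type*} [TopologicalSpace X] [PreconnectedSpace X]
    {θ γ δ : ℝ} (hγ : γ ∈ Set.Ioo θ (θ + 2 * π)) (hδ : δ ∈ Set.Ioo θ (θ + 2 * π)) {q : X → ℂ}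
    (hq : ∀ t, ‖q t‖ ≤ 1) {s t : X} (hs : q s = exp (γ * I)) (ht : q t = exp (δ * I)) {h : X → ℂ}
    (hh : Continuous h) (hexp : ∀ t, exp (h t) = exp (θ * I) - q t) :
    (h t).im - (h s).im = (δ - γ) / 2 := by
  have hre (t) : 0 < (exp (-(θ * I)) * exp (h t)).re := by
    rw [hexp]
    exact re_exp_neg_mul_sub_pos (hq t) (sub_ne_zero.1 (hexp t ▸ exp_ne_zero _))
  rw [im_sub_im_eq_arg_sub_arg hh hre, hexp, hexp, hs, ht, arg_exp_neg_mul_sub hγ,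
    arg_exp_neg_mul_sub hδ]
  ring

theorem exp_add_two_pi_mul_I (x : ℝ) : exp ((x + 2 * π : ℝ) * I) = exp (x * I) := by
  push_cast
  rw [add_mul, exp_add, exp_two_pi_mul_I, mul_one]

/-- The difference of points on two disjoint paths has a continuous logarithm on a square, whose
imaginary part would increase along the boundary by `2 * π` in total. -/
theorem exists_eq_of_norm_le_one {α β γ δ : ℝ} (h1 : α < γ) (h2 : γ < β) (h3 : β < δ)
    (h4 : δ < α + 2 * π) (p : Path (exp (α * I)) (exp (β * I)))
    (q : Path (exp (γ * I)) (exp (δ * I))) (hp : ∀ t, ‖p t‖ ≤ 1) (hq : ∀ t, ‖q t‖ ≤ 1) :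
    ∃ s t, p s = q t := by
  by_contra! hne
  have hp' (t : ℝ) : ‖p.extend t‖ ≤ 1 := hp _
  have hq' (t : ℝ) : ‖q.extend t‖ ≤ 1 := hq _
  obtain ⟨L, hL, hexp⟩ := exists_continuous_log (f := fun x : ℝ × ℝ => p.extend x.1 - q.extend x.2)
    (by fun_prop) fun x => sub_ne_zero.2 (hne _ _)
  have hexp' (s t) : exp (L (s, t) + π * I) = q.extend t - p.extend s := by
    rw [exp_add_pi_mul_I, hexp, neg_sub]
  have left := im_sub_im_eq_half_angle (θ := α) (γ := γ) (δ := δ) ⟨by linarith, by linarith⟩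
    ⟨by linarith, by linarith⟩ hq' (s := 0) (t := 1) (by simp) (by simp)
    (h := fun t => L (0, t)) (by fun_prop) fun t => by simp [hexp]
  have right := im_sub_im_eq_half_angle (θ := β) (γ := γ + 2 * π) (δ := δ)
    ⟨by linarith, by linarith⟩ ⟨by linarith, by linarith⟩ hq' (s := 0) (t := 1)
    (by simp [-ofReal_add, exp_add_two_pi_mul_I]) (by simp)
    (h := fun t => L (1, t)) (by fun_prop) fun t => by simp [hexp]
  have bottom := im_sub_im_eq_half_angle (θ := γ) (γ := α + 2 * π) (δ := β)
    ⟨by linarith, by linarith⟩ ⟨by linarith, by linarith⟩ hp' (s := 0) (t := 1)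
    (by simp [-ofReal_add, exp_add_two_pi_mul_I]) (by simp)
    (h := fun t => L (t, 0) + π * I) (by fun_prop) fun t => by simp [hexp']
  have top := im_sub_im_eq_half_angle (θ := δ) (γ := α + 2 * π) (δ := β + 2 * π)
    ⟨by linarith, by linarith⟩ ⟨by linarith, by linarith⟩ hp' (s := 0) (t := 1)
    (by simp [-ofReal_add, exp_add_two_pi_mul_I]) (by simp [-ofReal_add, exp_add_two_pi_mul_I])
    (h := fun t => L (t, 1) + π * I) (by fun_prop) fun t => by simp [hexp']
  simp only [add_im] at bottom top
  linarith [Real.pi_pos]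

/-- Twice the signed area of the triangle `a b z`: its sign tells on which side of the line
through `a` and `b` the point `z` lies. -/
def side (a b z : ℂ) : ℝ := (conj (b - a) * (z - a)).im

theorem side_exp (α β γ : ℝ) :
    side (exp (α * I)) (exp (β * I)) (exp (γ * I)) =
      4 * Real.sin ((β - α) / 2) * Real.sin ((γ - α) / 2) * Real.sin ((γ - β) / 2) := by
  have : conj (exp (β * I) - exp (α * I)) * (exp (γ * I) - exp (α * I)) =
      (4 * Real.sin ((β - α) / 2) * Real.sin ((γ - α) / 2) : ℝ) *
        exp (((γ - β) / 2 : ℝ) * I) := by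
    rw [exp_mul_I_sub_exp_mul_I, exp_mul_I_sub_exp_mul_I, map_mul, conj_ofReal, ← exp_conj,
      map_mul, conj_ofReal, conj_I, mul_mul_mul_comm, ← exp_add, ← ofReal_mul]
    congr 1
    · congr 1
      ring
    · congr 1
      push_cast
      ring
  rw [side, this, im_ofReal_mul, exp_ofReal_mul_I_im]

theorem exists_eq_exp_mul_I {z : ℂ} (hz : ‖z‖ = 1) (α : ℝ) :
    ∃ β ∈ Set.Ico α (α + 2 * π), z = exp (β * I) := by
  refine ⟨toIcoMod Real.two_pi_pos α z.arg, toIcoMod_mem_Ico Real.two_pi_pos α _, ?_⟩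
  have hexp : exp (toIcoMod Real.two_pi_pos α z.arg * I) = exp (z.arg * I) :=
    exp_eq_exp_iff_exists_int.2 ⟨-toIcoDiv Real.two_pi_pos α z.arg, by
      rw [toIcoMod]; push_cast; ring⟩
  rw [hexp, ← one_mul (exp _), ← ofReal_one, ← hz, norm_mul_exp_arg_mul_I]

theorem mem_Ioo_of_side_mul_side_neg {α β γ δ : ℝ} (hβ : β ∈ Set.Ico α (α + 2 * π))
    (hγ : γ ∈ Set.Ico α (α + 2 * π)) (hδ : δ ∈ Set.Ico α (α + 2 * π))
    (h : side (exp (α * I)) (exp (β * I)) (exp (γ * I)) *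
      side (exp (α * I)) (exp (β * I)) (exp (δ * I)) < 0) :
    γ ∈ Set.Ioo α β ∧ δ ∈ Set.Ioo β (α + 2 * π) ∨
      δ ∈ Set.Ioo α β ∧ γ ∈ Set.Ioo β (α + 2 * π) := by
  rw [side_exp, side_exp] at h
  have hα {x : ℝ} (hx : x ∈ Set.Ico α (α + 2 * π)) : 0 ≤ Real.sin ((x - α) / 2) :=
    Real.sin_nonneg_of_nonneg_of_le_pi (by linarith [hx.1]) (by linarith [hx.2])
  have hne {x : ℝ} (hx : x ∈ Set.Ico α (α + 2 * π)) (h0 : Real.sin ((x - α) / 2) ≠ 0) : α < x :=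
    hx.1.lt_of_ne fun h => h0 (by simp [h])
  have hpos {x : ℝ} (hx : x ∈ Set.Ico α (α + 2 * π)) (h : 0 < Real.sin ((x - β) / 2)) : β < x := by
    contrapose! h
    exact Real.sin_nonpos_of_nonpos_of_neg_pi_le (by linarith) (by linarith [hx.1, hβ.2])
  have hneg {x : ℝ} (hx : x ∈ Set.Ico α (α + 2 * π)) (h : Real.sin ((x - β) / 2) < 0) : x < β := by
    contrapose! h
    exact Real.sin_nonneg_of_nonneg_of_le_pi (by linarith) (by linarith [hx.2, hβ.1])
  have hsin : Real.sin ((γ - β) / 2) * Real.sin ((δ - β) / 2) < 0 := by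
    contrapose! h
    have := mul_nonneg (mul_nonneg (sq_nonneg (4 * Real.sin ((β - α) / 2)))
      (mul_nonneg (hα hγ) (hα hδ))) h
    linarith
  have hαγ : α < γ := hne hγ fun h0 => by simp [h0] at h
  have hαδ : α < δ := hne hδ fun h0 => by simp [h0] at h
  rcases mul_neg_iff.1 hsin with ⟨hγβ, hδβ⟩ | ⟨hγβ, hδβ⟩
  · exact Or.inr ⟨⟨hαδ, hneg hδ hδβ⟩, hpos hγ hγβ, hγ.2⟩
  · exact Or.inl ⟨⟨hαγ, hneg hγ hγβ⟩, hpos hδ hδβ, hδ.2⟩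

theorem exists_path_inversion {a b : ℂ} (ha : ‖a‖ = 1) (hb : ‖b‖ = 1) (p : Path a b)
    (hp : ∀ t, 1 ≤ ‖p t‖) : ∃ p' : Path a b, ∀ t, p' t = (conj (p t))⁻¹ ∧ ‖p' t‖ ≤ 1 := by
  have hfix {z : ℂ} (hz : ‖z‖ = 1) : z = (conj z)⁻¹ := by rw [inv_eq_conj (by simpa), conj_conj]
  have hp0 (t) : conj (p t) ≠ 0 := norm_pos_iff.1 (by simpa using one_pos.trans_le (hp t))
  refine ⟨⟨⟨fun t => (conj (p t))⁻¹, by fun_prop (disch := exact hp0)⟩,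
    by simpa using (hfix ha).symm, by simpa using (hfix hb).symm⟩, fun t => ⟨rfl, ?_⟩⟩
  simpa using inv_le_one_of_one_le₀ (hp t)

theorem exists_eq_of_one_le_norm {a b c d : ℂ} (ha : ‖a‖ = 1) (hb : ‖b‖ = 1) (hc : ‖c‖ = 1)
    (hd : ‖d‖ = 1) (hside : side a b c * side a b d < 0) (p : Path a b) (q : Path c d)
    (hp : ∀ t, 1 ≤ ‖p t‖) (hq : ∀ t, 1 ≤ ‖q t‖) : ∃ s t, p s = q t := by
  obtain ⟨p', hp'⟩ := exists_path_inversion ha hb p hp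
  obtain ⟨q', hq'⟩ := exists_path_inversion hc hd q hq
  suffices ∃ s t, p' s = q' t by
    obtain ⟨s, t, hst⟩ := this
    refine ⟨s, t, (starRingEnd ℂ).injective (inv_injective ?_)⟩
    rw [← (hp' s).1, hst, (hq' t).1]
  obtain ⟨α, -, rfl⟩ := exists_eq_exp_mul_I ha 0
  obtain ⟨β, hβ, rfl⟩ := exists_eq_exp_mul_I hb α
  obtain ⟨γ, hγ, rfl⟩ := exists_eq_exp_mul_I hc α
  obtain ⟨δ, hδ, rfl⟩ := exists_eq_exp_mul_I hd α
  rcases mem_Ioo_of_side_mul_side_neg hβ hγ hδ hside with ⟨h1, h2⟩ | ⟨h1, h2⟩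
  · exact exists_eq_of_norm_le_one h1.1 h1.2 h2.1 h2.2 p' q' (fun t => (hp' t).2)
      fun t => (hq' t).2
  · obtain ⟨s, t, hst⟩ := exists_eq_of_norm_le_one h1.1 h1.2 h2.1 h2.2 p' q'.symm
      (fun t => (hp' t).2) fun t => (hq' _).2
    exact ⟨s, _, hst⟩

end Plane

section Chords

open Complex

open scoped ComplexConjugate Real

theorem side_self_left (a b : ℂ) : side a b a = 0 := by simp [side]

theorem side_self_right (a b : ℂ) : side a b b = 0 := by
  rw [side, ← normSq_eq_conj_mul_self, ofReal_im]

theorem side_smul_add_smul (a b c d : ℂ) {s t : ℝ} (h : s + t = 1) :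
    side a b (s • c + t • d) = s * side a b c + t * side a b d := by
  obtain rfl : s = 1 - t := by linarith
  simp only [side, mul_im, conj_re, conj_im, sub_re, sub_im, add_re, add_im, smul_re, smul_im,
    smul_eq_mul]
  ring

theorem side_ne_zero {a b c : ℂ} (ha : ‖a‖ = 1) (hb : ‖b‖ = 1) (hc : ‖c‖ = 1) (hab : a ≠ b)
    (hac : a ≠ c) (hbc : b ≠ c) : side a b c ≠ 0 := by
  obtain ⟨α, -, rfl⟩ := exists_eq_exp_mul_I ha 0
  obtain ⟨β, hβ, rfl⟩ := exists_eq_exp_mul_I hb α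
  obtain ⟨γ, hγ, rfl⟩ := exists_eq_exp_mul_I hc α
  have hsin {x y : ℝ} (hx : x ∈ Set.Ico α (α + 2 * π)) (hy : y ∈ Set.Ico α (α + 2 * π))
      (hne : exp (y * I) ≠ exp (x * I)) : Real.sin ((x - y) / 2) ≠ 0 := fun h0 => by
    rw [Real.sin_eq_zero_iff_of_lt_of_lt (by linarith [hx.1, hy.2]) (by linarith [hx.2, hy.1])]
      at h0
    exact hne (by rw [show y = x by linarith])
  have hα : α ∈ Set.Ico α (α + 2 * π) := ⟨le_rfl, by linarith [Real.pi_pos]⟩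
  rw [side_exp]
  simp [hsin hβ hα hab, hsin hγ hα hac, hsin hγ hβ hbc]

theorem eq_zero_and_eq_zero_of_mul_add_mul_eq_zero {x y u v : ℝ} (hu : 0 ≤ u) (hv : 0 ≤ v)
    (hxy : 0 < x * y) (h : u * x + v * y = 0) : u = 0 ∧ v = 0 := by
  have hux : u * x ^ 2 = 0 := by
    have : u * x ^ 2 = -(v * (x * y)) := by linear_combination x * h
    exact le_antisymm (this ▸ neg_nonpos.2 (by positivity)) (by positivity)
  have hu0 : u = 0 := by simpa [left_ne_zero_of_mul hxy.ne'] using hux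
  exact ⟨hu0, by simpa [hu0, right_ne_zero_of_mul hxy.ne'] using h⟩

theorem side_mul_side_neg {a b c d z : ℂ} (ha : ‖a‖ = 1) (hb : ‖b‖ = 1) (hc : ‖c‖ = 1)
    (hd : ‖d‖ = 1) (hab : a ≠ b) (hac : a ≠ c) (had : a ≠ d) (hbc : b ≠ c) (hbd : b ≠ d)
    (hz : z ∈ segment ℝ a b) (hz' : z ∈ segment ℝ c d) : side a b c * side a b d < 0 := by
  obtain ⟨s, t, -, -, hst, rfl⟩ := hz
  obtain ⟨u, v, hu, hv, huv, h⟩ := hz'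
  replace h := congrArg (side a b) h
  rw [side_smul_add_smul _ _ _ _ huv, side_smul_add_smul _ _ _ _ hst, side_self_left,
    side_self_right] at h
  by_contra! hpos
  have := eq_zero_and_eq_zero_of_mul_add_mul_eq_zero hu hv
    (hpos.lt_of_ne' (mul_ne_zero (side_ne_zero ha hb hc hab hac hbc)
      (side_ne_zero ha hb hd hab had hbd))) (by simpa using h)
  linarith

theorem disjoint_segment {a b c d : ℂ} (hab : a ≠ b) (h : side a b c * side a b d < 0) :
    Disjoint (segment ℝ a c) (segment ℝ b d) := by
  refine Set.disjoint_left.2 ?_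
  rintro _ ⟨s, t, -, ht, hst, rfl⟩ ⟨u, v, -, hv, huv, hz⟩
  have hside := congrArg (side a b) hz
  rw [side_smul_add_smul _ _ _ _ hst, side_smul_add_smul _ _ _ _ huv, side_self_left,
    side_self_right, mul_zero, mul_zero, zero_add, zero_add] at hside
  obtain ⟨rfl, h0⟩ := eq_zero_and_eq_zero_of_mul_add_mul_eq_zero (x := side a b c)
    (y := -side a b d) ht hv (by linarith) (by linarith)
  obtain rfl : s = 1 := by linarith
  obtain rfl : u = 1 := by linarith
  exact hab (by simpa [h0] using hz.symm)

theorem eq_of_mem_segment_of_mem_segment {a b c z : ℂ} (ha : ‖a‖ = 1) (hb : ‖b‖ = 1)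
    (hc : ‖c‖ = 1) (hab : a ≠ b) (hac : a ≠ c) (hbc : b ≠ c) (hz : z ∈ segment ℝ a b)
    (hz' : z ∈ segment ℝ a c) : z = a := by
  obtain ⟨u, v, -, -, huv, rfl⟩ := hz'
  obtain ⟨s, t, -, -, hst, h⟩ := hz
  replace h := congrArg (side a b) h
  rw [side_smul_add_smul _ _ _ _ huv, side_smul_add_smul _ _ _ _ hst, side_self_left,
    side_self_right] at h
  have hv0 : v = 0 := by simpa [side_ne_zero ha hb hc hab hac hbc] using h
  obtain rfl : u = 1 := by linarith
  simp [hv0]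

theorem norm_le_one_of_mem_segment {a b z : ℂ} (ha : ‖a‖ = 1) (hb : ‖b‖ = 1)
    (hz : z ∈ segment ℝ a b) : ‖z‖ ≤ 1 := by
  simpa using (convex_closedBall (0 : ℂ) 1).segment_subset (by simp [ha]) (by simp [hb]) hz

theorem eq_or_eq_of_mem_segment {a b z : ℂ} (ha : ‖a‖ = 1) (hb : ‖b‖ = 1) (hab : a ≠ b)
    (hz : z ∈ segment ℝ a b) (hz1 : ‖z‖ = 1) : z = a ∨ z = b := by
  by_contra! h
  have hopen := mem_openSegment_of_ne_left_right h.1.symm h.2.symm hz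
  have := openSegment_subset_ball_of_ne (z := 0) (r := 1) (by simp [ha]) (by simp [hb]) hab hopen
  rw [mem_ball_zero_iff] at this
  exact this.ne hz1

end Chords

/-! ### Embedded graphs -/

section Arcs

open Set

variable {X Y : Type*} [TopologicalSpace X] [TopologicalSpace Y] {x y z : X} {A B : Set X}

/-- `A` is a simple arc from `x` to `y`: the image of an injective path. -/
def IsArc (x y : X) (A : Set X) : Prop :=
  ∃ γ : Path x y, Function.Injective γ ∧ range γ = A

theorem IsArc.left_mem (h : IsArc x y A) : x ∈ A := by
  obtain ⟨γ, -, rfl⟩ := h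
  exact γ.source_mem_range

theorem IsArc.right_mem (h : IsArc x y A) : y ∈ A := by
  obtain ⟨γ, -, rfl⟩ := h
  exact γ.target_mem_range

theorem IsArc.symm (h : IsArc x y A) : IsArc y x A := by
  obtain ⟨γ, hγ, rfl⟩ := h
  exact ⟨γ.symm, hγ.comp unitInterval.symm_bijective.injective, γ.symm_range⟩

theorem IsArc.image (h : IsArc x y A) {f : X → Y} (hf : Continuous f)
    (hinj : Function.Injective f) : IsArc (f x) (f y) (f '' A) := by
  obtain ⟨γ, hγ, rfl⟩ := h
  exact ⟨γ.map hf, hinj.comp hγ, range_comp f γ⟩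

theorem IsArc.trans (hA : IsArc x y A) (hB : IsArc y z B) (hAB : A ∩ B ⊆ {y}) :
    IsArc x z (A ∪ B) := by
  obtain ⟨γ, hγ, rfl⟩ := hA
  obtain ⟨δ, hδ, rfl⟩ := hB
  refine ⟨γ.trans δ, ?_, γ.trans_range δ⟩
  have hmeet {s t : unitInterval} (h : γ s = δ t) : s = 1 ∧ t = 0 := by
    have hy : γ s = y := hAB ⟨mem_range_self s, h ▸ mem_range_self t⟩
    exact ⟨hγ (by rw [hy, γ.target]), hδ (by rw [← h, hy, δ.source])⟩
  intro s t hst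
  ext
  simp only [Path.trans_apply] at hst
  split_ifs at hst with hs ht ht
  · simpa using hγ hst
  · have := congrArg Subtype.val (hmeet hst).2
    norm_num at this
    linarith
  · have := congrArg Subtype.val (hmeet hst.symm).2
    norm_num at this
    linarith
  · simpa using hδ hst

theorem isArc_segment {E : Type*} [AddCommGroup E] [Module ℝ E] [TopologicalSpace E]
    [IsTopologicalAddGroup E] [ContinuousSMul ℝ E] {a b : E} (h : a ≠ b) :
    IsArc a b (segment ℝ a b) :=
  ⟨Path.segment a b, fun _ _ hst => Subtype.ext (AffineMap.lineMap_injective ℝ h hst),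
    Path.range_segment a b⟩

theorem isArc_image_Icc {γ : ℝ → X} (hγ : ContinuousOn γ (Icc 0 1)) (hinj : InjOn γ (Icc 0 1)) :
    IsArc (γ 0) (γ 1) (γ '' Icc 0 1) :=
  ⟨⟨⟨fun t => γ t, hγ.domRestrict⟩, by simp, by simp⟩, fun s t h => Subtype.ext (hinj s.2 t.2 h),
    by rw [image_eq_range]; rfl⟩

theorem isArc_subpath {γ : Path x y} (hγ : Function.Injective γ) {s t : unitInterval}
    (hst : s < t) : IsArc (γ s) (γ t) (γ '' Icc s t) := by
  refine ⟨γ.subpath s t, hγ.comp fun u v huv => ?_, γ.range_subpath_of_le s t hst.le⟩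
  have := congrArg Subtype.val huv
  have hne : (t : ℝ) - s ≠ 0 := sub_ne_zero.2 fun h => hst.ne' (Subtype.ext h)
  simp only [Icc.coe_convexComb] at this
  exact Subtype.ext (mul_left_cancel₀ hne (by linear_combination this))

theorem IsArc.exists_isArc_isArc (h : IsArc x y A) (hz : z ∈ A) (hx : z ≠ x) (hy : z ≠ y) :
    ∃ A₁ A₂, IsArc x z A₁ ∧ IsArc y z A₂ ∧ A₁ ∪ A₂ = A ∧ A₁ ∩ A₂ = {z} := by
  obtain ⟨γ, hγ, rfl⟩ := h
  obtain ⟨t, rfl⟩ := hz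
  have h0 : 0 < t := unitInterval.pos_iff_ne_zero.2 fun h => hx (by rw [h]; exact γ.source)
  have h1 : t < 1 := unitInterval.lt_one_iff_ne_one.2 fun h => hy (by rw [h]; exact γ.target)
  refine ⟨γ '' Icc 0 t, γ '' Icc t 1, by simpa using isArc_subpath hγ h0,
    by simpa using (isArc_subpath hγ h1).symm, ?_, ?_⟩
  · rw [← image_union, Icc_union_Icc_eq_Icc h0.le h1.le, ← image_univ]
    congr 1
    exact Icc_bot_top
  · rw [← image_inter hγ, Icc_inter_Icc_eq_singleton h0.le h1.le, image_singleton]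

theorem IsArc.exists_first_hit (h : IsArc x y A) {S : Set X} (hS : IsClosed S) (hx : x ∉ S)
    (hy : y ∈ S) : ∃ a ∈ frontier S, ∃ L ⊆ A, IsArc x a L ∧ L ∩ S = {a} := by
  obtain ⟨γ, hγ, rfl⟩ := h
  obtain ⟨t, htS : γ t ∈ S, hmin⟩ := (hS.preimage γ.continuous).isCompact.exists_isLeast
    ⟨1, by simpa using hy⟩
  have hlt {s} (hs : s < t) : γ s ∉ S := fun h => (hmin h).not_gt hs
  have h0 : 0 < t := unitInterval.pos_iff_ne_zero.2 fun h => hx (by rwa [h, γ.source] at htS)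
  refine ⟨γ t, ?_, γ '' Icc 0 t, image_subset_range _ _, by simpa using isArc_subpath hγ h0, ?_⟩
  · have hcl : t ∈ closure (Iio t) := (closure_Iio' (a := t) ⟨0, h0⟩).ge (self_mem_Iic (a := t))
    rw [frontier_eq_closure_inter_closure]
    exact ⟨subset_closure htS, map_mem_closure γ.continuous hcl fun s => hlt⟩
  · refine Subset.antisymm ?_ (singleton_subset_iff.2 ⟨⟨t, ⟨h0.le, le_rfl⟩, rfl⟩, htS⟩)
    rintro _ ⟨⟨s, hs, rfl⟩, hsS⟩
    rw [hs.2.antisymm (hmin hsS), mem_singleton_iff]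

end Arcs

section Embeddings

open Set

variable {V : Type*} {E F : Type*} [TopologicalSpace E] [TopologicalSpace F]

/-- A topological embedding of a graph in a space: the vertices are placed at distinct points by
`pos`, the edge `e` is represented by a simple arc `A e`, and arcs meet vertices and each other only
where the graph prescribes. Arcs are kept as point sets indexed by unordered pairs; their values
outside the edge set play no role. -/
structure IsGraphEmbedding (G : SimpleGraph V) (pos : V → E) (A : Sym2 V → Set E) : Prop where
  injective : Function.Injective pos
  isArc : ∀ ⦃u v⦄, G.Adj u v → IsArc (pos u) (pos v) (A s(u, v))
  mem_of_pos_mem : ∀ ⦃e⦄, e ∈ G.edgeSet → ∀ ⦃w⦄, pos w ∈ A e → w ∈ e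
  exists_of_mem : ∀ ⦃e f⦄, e ∈ G.edgeSet → f ∈ G.edgeSet → e ≠ f → ∀ ⦃z⦄, z ∈ A e → z ∈ A f →
    ∃ v ∈ e, v ∈ f ∧ z = pos v

theorem IsGraphEmbedding.image {G : SimpleGraph V} {pos : V → E} {A : Sym2 V → Set E}
    (h : IsGraphEmbedding G pos A) {φ : E → F} (hφ : Continuous φ) (hinj : Function.Injective φ) :
    IsGraphEmbedding G (φ ∘ pos) (fun e => φ '' A e) where
  injective := hinj.comp h.injective
  isArc u v huv := (h.isArc huv).image hφ hinj
  mem_of_pos_mem e he w hw := h.mem_of_pos_mem he (hinj.mem_set_image.1 hw)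
  exists_of_mem e f he hf hef := by
    rintro _ ⟨z, hz, rfl⟩ hz'
    obtain ⟨v, hve, hvf, rfl⟩ := h.exists_of_mem he hf hef hz (hinj.mem_set_image.1 hz')
    exact ⟨v, hve, hvf, rfl⟩

theorem IsGraphEmbedding.mono {G H : SimpleGraph V} {pos : V → E} {A : Sym2 V → Set E}
    (h : IsGraphEmbedding G pos A) (hH : H ≤ G) : IsGraphEmbedding H pos A where
  injective := h.injective
  isArc _ _ huv := h.isArc (hH huv)
  mem_of_pos_mem _ he := h.mem_of_pos_mem (SimpleGraph.edgeSet_mono hH he)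
  exists_of_mem _ _ he hf :=
    h.exists_of_mem (SimpleGraph.edgeSet_mono hH he) (SimpleGraph.edgeSet_mono hH hf)

theorem IsGraphEmbedding.exists_parametrization {G : SimpleGraph V} {pos : V → E}
    {A : Sym2 V → Set E} (h : IsGraphEmbedding G pos A) (e : G.edgeSet) :
    ∃ γ : ℝ → E, Continuous γ ∧ InjOn γ (Icc 0 1) ∧ (∀ t, γ t ∈ A e) ∧
      (∃ u v, (e : Sym2 V) = s(u, v) ∧ γ 0 = pos u ∧ γ 1 = pos v) ∧
      ∀ w, ∀ t ∈ Ioo (0 : ℝ) 1, γ t ≠ pos w := by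
  obtain ⟨⟨u, v⟩, huv⟩ := e
  obtain ⟨γ, hγ, hA⟩ := h.isArc huv
  have hinj : InjOn γ.extend (Icc 0 1) := fun s hs t ht hst => by
    rw [γ.extend_apply hs, γ.extend_apply ht] at hst
    exact congrArg Subtype.val (hγ hst)
  have hmem (t : ℝ) : γ.extend t ∈ A s(u, v) := hA ▸ mem_range_self _
  refine ⟨γ.extend, γ.continuous_extend, hinj, hmem, ⟨u, v, rfl, by simp, by simp⟩,
    fun w t ht hw => ?_⟩
  have ht' := Ioo_subset_Icc_self ht
  rcases Sym2.mem_iff.1 (h.mem_of_pos_mem huv (hw ▸ hmem t)) with rfl | rfl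
  · exact ht.1.ne' (hinj ht' (by simp) (by simpa using hw))
  · exact ht.2.ne (hinj ht' (by simp) (by simpa using hw))

theorem IsGraphEmbedding.isPlanarGraph {G : SimpleGraph V} {pos : V → ℝ × ℝ}
    {A : Sym2 V → Set (ℝ × ℝ)} (h : IsGraphEmbedding G pos A) : IsPlanarGraph G := by
  choose γ hcont hinj hmem hends havoid using h.exists_parametrization
  refine ⟨⟨pos, h.injective, γ, fun e => (hcont e).continuousOn, hinj, hends, havoid⟩,
    fun e f hef => disjoint_iff_inter_eq_empty.1 (disjoint_left.2 ?_)⟩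
  rintro _ ⟨t, ht, rfl⟩ ⟨s, -, hs : γ f s = γ e t⟩
  obtain ⟨v, -, -, hv⟩ := h.exists_of_mem e.2 f.2 (Subtype.coe_ne_coe.2 hef) (hmem e t)
    (hs ▸ hmem f s)
  exact havoid e v t ht hv

end Embeddings

section Drawings

open Set

variable {V : Type*} {G : SimpleGraph V} (d : Drawing G)

/-- The closed arc of a drawing that represents a given pair of vertices (empty for non-edges). -/
def Drawing.closedArc (e : Sym2 V) : Set (ℝ × ℝ) :=
  ⋃ h : e ∈ G.edgeSet, d.arc ⟨e, h⟩ '' Icc 0 1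

theorem Drawing.closedArc_coe (e : G.edgeSet) : d.closedArc e = d.arc e '' Icc 0 1 := by
  simp [closedArc]

theorem Drawing.isArc_closedArc {u v : V} (h : G.Adj u v) :
    IsArc (d.vpos u) (d.vpos v) (d.closedArc s(u, v)) := by
  let e : G.edgeSet := ⟨s(u, v), h⟩
  have harc := isArc_image_Icc (d.cont e) (d.injOn e)
  rw [← d.closedArc_coe] at harc
  obtain ⟨u', v', he, h0, h1⟩ := d.ends e
  rw [h0, h1] at harc
  rcases Sym2.eq_iff.1 he with ⟨rfl, rfl⟩ | ⟨rfl, rfl⟩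
  · exact harc
  · exact harc.symm

theorem Drawing.mem_closedArc {e : G.edgeSet} {z : ℝ × ℝ} :
    z ∈ d.closedArc e ↔ z ∈ d.arcInt e ∨ ∃ v ∈ (e : Sym2 V), z = d.vpos v := by
  obtain ⟨u, v, he, h0, h1⟩ := d.ends e
  rw [closedArc_coe, ← Ioo_union_both (zero_le_one' ℝ), image_union, image_pair, h0, h1, he]
  exact or_congr Iff.rfl (by simp)

theorem Drawing.vpos_notMem_arcInt (e : G.edgeSet) (v : V) : d.vpos v ∉ d.arcInt e := by
  rintro ⟨t, ht, h⟩
  exact d.interiorAvoidsVertices e v t ht h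

theorem Drawing.mem_of_vpos_mem_closedArc {e : G.edgeSet} {v : V} (h : d.vpos v ∈ d.closedArc e) :
    v ∈ (e : Sym2 V) := by
  rcases d.mem_closedArc.1 h with h | ⟨w, hw, h⟩
  · exact absurd h (d.vpos_notMem_arcInt e v)
  · exact d.vinj h ▸ hw

theorem Drawing.exists_of_mem_closedArc {e f : G.edgeSet} {z : ℝ × ℝ} (he : z ∈ d.closedArc e)
    (hf : z ∈ d.closedArc f) (hz : z ∉ d.arcInt e ∩ d.arcInt f) :
    ∃ v ∈ (e : Sym2 V), v ∈ (f : Sym2 V) ∧ z = d.vpos v := by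
  rcases d.mem_closedArc.1 he with he' | ⟨v, hv, rfl⟩
  · rcases d.mem_closedArc.1 hf with hf' | ⟨v, -, rfl⟩
    · exact absurd ⟨he', hf'⟩ hz
    · exact absurd he' (d.vpos_notMem_arcInt e v)
  · exact ⟨v, hv, d.mem_of_vpos_mem_closedArc hf, rfl⟩

theorem Drawing.isGraphEmbedding {H : SimpleGraph V} (hH : H ≤ G)
    (hd : ∀ e f : G.edgeSet, e ≠ f → (e : Sym2 V) ∈ H.edgeSet → (f : Sym2 V) ∈ H.edgeSet →
      Disjoint (d.arcInt e) (d.arcInt f)) : IsGraphEmbedding H d.vpos d.closedArc where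
  injective := d.vinj
  isArc _ _ h := d.isArc_closedArc (hH h)
  mem_of_pos_mem e he _ hw :=
    d.mem_of_vpos_mem_closedArc (e := ⟨e, SimpleGraph.edgeSet_mono hH he⟩) hw
  exists_of_mem e f he hf hef _ hz hz' := by
    let e' : G.edgeSet := ⟨e, SimpleGraph.edgeSet_mono hH he⟩
    let f' : G.edgeSet := ⟨f, SimpleGraph.edgeSet_mono hH hf⟩
    have hdisj := hd e' f' (fun h => hef (congrArg Subtype.val h)) he hf
    exact d.exists_of_mem_closedArc (e := e') (f := f') hz hz' fun h =>
      disjoint_left.1 hdisj h.1 h.2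

end Drawings

section JoinAlong

open Set Sum

variable {V ι : Type*} {G : SimpleGraph V} {en : ι → V} {K : SimpleGraph ι}

/-- The disjoint union of `G` and `K` together with an edge, called a leg, from `en i` to `i` for
each vertex `i` of `K`. -/
def joinAlong (G : SimpleGraph V) (en : ι → V) (K : SimpleGraph ι) : SimpleGraph (V ⊕ ι) where
  Adj
    | inl u, inl v => G.Adj u v
    | inl u, inr i => en i = u
    | inr i, inl u => en i = u
    | inr i, inr j => K.Adj i j
  symm := ⟨by
    rintro (u | i) (v | j) h
    exacts [G.adj_symm h, h, h, K.adj_symm h]⟩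
  loopless := ⟨by
    rintro (u | i) h
    exacts [G.irrefl h, K.irrefl h]⟩

@[simp] theorem joinAlong_adj_inl_inl {u v : V} :
    (joinAlong G en K).Adj (inl u) (inl v) ↔ G.Adj u v := Iff.rfl

@[simp] theorem joinAlong_adj_inl_inr {u : V} {i : ι} :
    (joinAlong G en K).Adj (inl u) (inr i) ↔ en i = u := Iff.rfl

@[simp] theorem joinAlong_adj_inr_inl {u : V} {i : ι} :
    (joinAlong G en K).Adj (inr i) (inl u) ↔ en i = u := Iff.rfl

@[simp] theorem joinAlong_adj_inr_inr {i j : ι} :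
    (joinAlong G en K).Adj (inr i) (inr j) ↔ K.Adj i j := Iff.rfl

theorem joinAlong_mono {K' : SimpleGraph ι} (hK : K ≤ K') :
    joinAlong G en K ≤ joinAlong G en K' := by
  rintro (u | i) (v | j) h
  exacts [h, h, h, hK h]

/-- The pair of vertices joined by the leg that leads to `i`. -/
abbrev leg (en : ι → V) (i : ι) : Sym2 (V ⊕ ι) := s(inl (en i), inr i)

theorem mem_edgeSet_joinAlong {e : Sym2 (V ⊕ ι)} (he : e ∈ (joinAlong G en K).edgeSet) :
    (∃ e' ∈ G.edgeSet, e = e'.map inl) ∨ (∃ i, e = leg en i) ∨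
      ∃ e' ∈ K.edgeSet, e = e'.map inr := by
  induction e with | _ x y
  rcases x with u | i <;> rcases y with v | j
  · exact Or.inl ⟨s(u, v), he, rfl⟩
  · exact Or.inr (Or.inl ⟨j, by rw [leg, show en j = u from he]⟩)
  · exact Or.inr (Or.inl ⟨i, by rw [leg, show en i = v from he, Sym2.eq_swap]⟩)
  · exact Or.inr (Or.inr ⟨s(i, j), he, rfl⟩)

theorem leg_mem_edgeSet (i : ι) : leg en i ∈ (joinAlong G en K).edgeSet :=
  show (joinAlong G en K).Adj _ _ from joinAlong_adj_inl_inr.2 rfl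

/-- The function on the edges of `joinAlong G en K` put together from functions `B` on the edges of
`G`, `L` on the legs and `C` on the edges of `K`. -/
def joinElim {X : Type*} (B : Sym2 V → X) (L : ι → X) (C : Sym2 ι → X) : Sym2 (V ⊕ ι) → X :=
  Sym2.lift ⟨fun
    | inl u, inl v => B s(u, v)
    | inl _, inr i => L i
    | inr i, inl _ => L i
    | inr i, inr j => C s(i, j), by
    rintro (u | i) (v | j)
    exacts [congrArg B Sym2.eq_swap, rfl, rfl, congrArg C Sym2.eq_swap]⟩

section

variable {X : Type*} (B : Sym2 V → X) (L : ι → X) (C : Sym2 ι → X)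

@[simp] theorem joinElim_leg (u : V) (i : ι) : joinElim B L C s(inl u, inr i) = L i := rfl

@[simp] theorem joinElim_map_inl (e : Sym2 V) : joinElim B L C (e.map inl) = B e := by
  induction e with | _ u v
  rfl

@[simp] theorem joinElim_map_inr (e : Sym2 ι) : joinElim B L C (e.map inr) = C e := by
  induction e with | _ i j
  rfl

end

/-- An embedding of `G` outside the closed unit disc, together with disjoint legs `L i` that lead
from the vertices `en i` to points `a i` of the unit circle. -/
structure IsLegSystem (G : SimpleGraph V) (en : ι → V) (pos : V → ℂ) (B : Sym2 V → Set ℂ)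
    (a : ι → ℂ) (L : ι → Set ℂ) : Prop where
  isGraphEmbedding : IsGraphEmbedding G pos B
  one_lt_norm_pos : ∀ v, 1 < ‖pos v‖
  one_lt_norm_of_mem : ∀ ⦃e⦄, e ∈ G.edgeSet → ∀ ⦃z⦄, z ∈ B e → 1 < ‖z‖
  norm_eq_one : ∀ i, ‖a i‖ = 1
  isArc_leg : ∀ i, IsArc (pos (en i)) (a i) (L i)
  eq_of_norm_le_one : ∀ ⦃i z⦄, z ∈ L i → ‖z‖ ≤ 1 → z = a i
  eq_of_pos_mem : ∀ ⦃i v⦄, pos v ∈ L i → v = en i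
  eq_of_mem_of_mem_edge : ∀ ⦃i e⦄, e ∈ G.edgeSet → ∀ ⦃z⦄, z ∈ L i → z ∈ B e → z = pos (en i)
  eq_of_mem_of_mem : ∀ ⦃i j⦄, i ≠ j → ∀ ⦃z⦄, z ∈ L i → z ∈ L j → z = pos (en i)

namespace IsLegSystem

variable {pos : V → ℂ} {B : Sym2 V → Set ℂ} {a : ι → ℂ} {L : ι → Set ℂ} {C : Sym2 ι → Set ℂ}

theorem one_le_norm_of_mem (h : IsLegSystem G en pos B a L) {i : ι} {z : ℂ} (hz : z ∈ L i) :
    1 ≤ ‖z‖ := by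
  by_contra! hlt
  rw [h.eq_of_norm_le_one hz hlt.le, h.norm_eq_one] at hlt
  exact lt_irrefl _ hlt

theorem pos_ne (h : IsLegSystem G en pos B a L) (v : V) (i : ι) : pos v ≠ a i := fun hv => by
  have := h.one_lt_norm_pos v
  rw [hv, h.norm_eq_one] at this
  exact lt_irrefl _ this

theorem injective (h : IsLegSystem G en pos B a L) : Function.Injective a := fun i j hij => by
  by_contra hne
  exact h.pos_ne (en i) i (h.eq_of_mem_of_mem hne (h.isArc_leg i).right_mem
    (hij ▸ (h.isArc_leg j).right_mem)).symm

theorem mem_of_elim_mem_joinElim (h : IsLegSystem G en pos B a L) (hK : IsGraphEmbedding K a C)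
    (hC : ∀ ⦃e⦄, e ∈ K.edgeSet → ∀ ⦃z⦄, z ∈ C e → ‖z‖ ≤ 1) {e : Sym2 (V ⊕ ι)}
    (he : e ∈ (joinAlong G en K).edgeSet) {x : V ⊕ ι} (hx : Sum.elim pos a x ∈ joinElim B L C e) :
    x ∈ e := by
  rcases mem_edgeSet_joinAlong he with ⟨e, he', rfl⟩ | ⟨i, rfl⟩ | ⟨e, he', rfl⟩ <;>
    rcases x with v | j <;> simp only [elim_inl, elim_inr, joinElim_map_inl, joinElim_map_inr,
      joinElim_leg] at hx
  · exact Sym2.mem_map.2 ⟨v, h.isGraphEmbedding.mem_of_pos_mem he' hx, rfl⟩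
  · exact absurd (h.one_lt_norm_of_mem he' hx) (h.norm_eq_one j).not_gt
  · simp [h.eq_of_pos_mem hx]
  · simp [h.injective (h.eq_of_norm_le_one hx (h.norm_eq_one j).le)]
  · exact absurd (hC he' hx) (h.one_lt_norm_pos v).not_ge
  · exact Sym2.mem_map.2 ⟨j, hK.mem_of_pos_mem he' hx, rfl⟩

theorem exists_of_mem_joinElim (h : IsLegSystem G en pos B a L) (hK : IsGraphEmbedding K a C)
    (hC : ∀ ⦃e⦄, e ∈ K.edgeSet → ∀ ⦃z⦄, z ∈ C e → ‖z‖ ≤ 1) {e f : Sym2 (V ⊕ ι)}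
    (he : e ∈ (joinAlong G en K).edgeSet) (hf : f ∈ (joinAlong G en K).edgeSet) (hef : e ≠ f)
    {z : ℂ} (hze : z ∈ joinElim B L C e) (hzf : z ∈ joinElim B L C f) :
    ∃ x ∈ e, x ∈ f ∧ z = Sum.elim pos a x := by
  have edge_leg {e : Sym2 V} (he : e ∈ G.edgeSet) {i : ι} (hze : z ∈ B e) (hzi : z ∈ L i) :
      inl (en i) ∈ e.map (inl : V → V ⊕ ι) ∧ z = pos (en i) := by
    obtain rfl := h.eq_of_mem_of_mem_edge he hzi hze
    exact ⟨Sym2.mem_map.2 ⟨_, h.isGraphEmbedding.mem_of_pos_mem he hze, rfl⟩, rfl⟩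
  have leg_inner {e : Sym2 ι} (he : e ∈ K.edgeSet) {i : ι} (hzi : z ∈ L i) (hze : z ∈ C e) :
      inr i ∈ e.map (inr : ι → V ⊕ ι) ∧ z = a i := by
    obtain rfl := h.eq_of_norm_le_one hzi (hC he hze)
    exact ⟨Sym2.mem_map.2 ⟨_, hK.mem_of_pos_mem he hze, rfl⟩, rfl⟩
  have edge_inner {e : Sym2 V} (he : e ∈ G.edgeSet) {f : Sym2 ι} (hf : f ∈ K.edgeSet)
      (hze : z ∈ B e) (hzf : z ∈ C f) : False :=
    (h.one_lt_norm_of_mem he hze).not_ge (hC hf hzf)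
  rcases mem_edgeSet_joinAlong he with ⟨e, he', rfl⟩ | ⟨i, rfl⟩ | ⟨e, he', rfl⟩ <;>
    rcases mem_edgeSet_joinAlong hf with ⟨f, hf', rfl⟩ | ⟨j, rfl⟩ | ⟨f, hf', rfl⟩ <;>
    simp only [joinElim_map_inl, joinElim_map_inr, joinElim_leg] at hze hzf
  · obtain ⟨v, hve, hvf, hz⟩ :=
      h.isGraphEmbedding.exists_of_mem he' hf' (fun h => hef (by rw [h])) hze hzf
    exact ⟨inl v, Sym2.mem_map.2 ⟨v, hve, rfl⟩, Sym2.mem_map.2 ⟨v, hvf, rfl⟩, hz⟩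
  · exact ⟨_, (edge_leg he' hze hzf).1, Sym2.mem_mk_left _ _, (edge_leg he' hze hzf).2⟩
  · exact (edge_inner he' hf' hze hzf).elim
  · exact ⟨_, Sym2.mem_mk_left _ _, edge_leg hf' hzf hze⟩
  · have hij : i ≠ j := fun h => hef (by rw [h])
    have hzi := h.eq_of_mem_of_mem hij hze hzf
    have hzj := h.eq_of_mem_of_mem hij.symm hzf hze
    have hen : en i = en j := h.isGraphEmbedding.injective (hzi ▸ hzj)
    exact ⟨inl (en i), by simp, by simp [hen], hzi⟩
  · exact ⟨_, Sym2.mem_mk_right _ _, leg_inner hf' hze hzf⟩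
  · exact (edge_inner hf' he' hzf hze).elim
  · exact ⟨_, (leg_inner he' hzf hze).1, Sym2.mem_mk_right _ _, (leg_inner he' hzf hze).2⟩
  · obtain ⟨i, hie, hif, hz⟩ := hK.exists_of_mem he' hf' (fun h => hef (by rw [h])) hze hzf
    exact ⟨inr i, Sym2.mem_map.2 ⟨i, hie, rfl⟩, Sym2.mem_map.2 ⟨i, hif, rfl⟩, hz⟩

theorem isGraphEmbedding_joinAlong (h : IsLegSystem G en pos B a L)
    (hK : IsGraphEmbedding K a C) (hC : ∀ ⦃e⦄, e ∈ K.edgeSet → ∀ ⦃z⦄, z ∈ C e → ‖z‖ ≤ 1) :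
    IsGraphEmbedding (joinAlong G en K) (Sum.elim pos a) (joinElim B L C) where
  injective := h.isGraphEmbedding.injective.sumElim h.injective h.pos_ne
  isArc := by
    rintro (u | i) (v | j) huv
    · exact h.isGraphEmbedding.isArc huv
    · obtain rfl : en j = u := huv
      exact h.isArc_leg j
    · obtain rfl : en i = v := huv
      exact (h.isArc_leg i).symm
    · exact hK.isArc huv
  mem_of_pos_mem _ he _ := h.mem_of_elim_mem_joinElim hK hC he
  exists_of_mem _ _ he hf hef _ := h.exists_of_mem_joinElim hK hC he hf hef

end IsLegSystem

end JoinAlong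

section Subdivision

open Set

variable {V W : Type*} {G : SimpleGraph V} {H : SimpleGraph W}

/-- `H` is a subdivision of `G`: each edge `e` of `G` is replaced by a path whose edges are those
labelled `e`. Only the vertices in the range of `ι` are branch vertices. -/
structure IsSubdivision (G : SimpleGraph V) (H : SimpleGraph W) (ι : V → W)
    (label : Sym2 W → Sym2 V) : Prop where
  injective : Function.Injective ι
  exists_path : ∀ ⦃u v⦄, G.Adj u v → ∃ p : H.Walk (ι u) (ι v), p.IsPath ∧
    ∀ e, e ∈ p.edges ↔ e ∈ H.edgeSet ∧ label e = s(u, v)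
  mem_label : ∀ ⦃e⦄, e ∈ H.edgeSet → ∀ ⦃v⦄, ι v ∈ e → v ∈ label e
  mem_range : ∀ ⦃e f⦄, e ∈ H.edgeSet → f ∈ H.edgeSet → label e ≠ label f →
    ∀ ⦃x⦄, x ∈ e → x ∈ f → x ∈ range ι

variable {E : Type*} [TopologicalSpace E] {pos : W → E} {A : Sym2 W → Set E}

theorem IsGraphEmbedding.isArc_iUnion_edges (h : IsGraphEmbedding H pos A) {x y : W}
    (p : H.Walk x y) (hp : p.IsPath) (hxy : x ≠ y) :
    IsArc (pos x) (pos y) (⋃ e ∈ p.edges, A e) := by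
  induction p with
  | nil => exact absurd rfl hxy
  | @cons x v y hxv q ih =>
    rw [Walk.cons_isPath_iff] at hp
    simp only [Walk.edges_cons, List.mem_cons, iUnion_iUnion_eq_or_left]
    rcases eq_or_ne v y with rfl | hvy
    · rw [Walk.eq_nil_iff_nil.2 (Walk.isPath_iff_nil.1 hp.1)]
      simpa using h.isArc hxv
    · refine (h.isArc hxv).trans (ih hp.1 hvy) ?_
      rintro z ⟨hz, hz'⟩
      obtain ⟨f, hf, hzf⟩ := mem_iUnion₂.1 hz'
      have hx {w : W} (hw : w ∈ f) : w ≠ x := fun hwx =>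
        hp.2 (hwx ▸ q.mem_support_of_mem_edges hf hw)
      obtain ⟨w, hwe, hwf, rfl⟩ := h.exists_of_mem hxv (q.edges_subset_edgeSet hf)
        (fun hef => hx (hef ▸ Sym2.mem_mk_left x v) rfl) hz hzf
      rw [(Sym2.mem_iff.1 hwe).resolve_left (hx hwf), mem_singleton_iff]

theorem IsGraphEmbedding.of_isSubdivision (h : IsGraphEmbedding H pos A) {ι : V → W}
    {label : Sym2 W → Sym2 V} (hs : IsSubdivision G H ι label) :
    IsGraphEmbedding G (pos ∘ ι) fun e => ⋃ f ∈ H.edgeSet ∩ label ⁻¹' {e}, A f where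
  injective := h.injective.comp hs.injective
  isArc u v huv := by
    obtain ⟨p, hp, hedges⟩ := hs.exists_path huv
    have : H.edgeSet ∩ label ⁻¹' {s(u, v)} = {e | e ∈ p.edges} := by
      ext e
      exact (hedges e).symm
    rw [this]
    exact h.isArc_iUnion_edges p hp (hs.injective.ne huv.ne)
  mem_of_pos_mem e _ w hw := by
    obtain ⟨f, ⟨hf, rfl⟩, hwf⟩ := mem_iUnion₂.1 hw
    exact hs.mem_label hf (h.mem_of_pos_mem hf hwf)
  exists_of_mem e e' _ _ hne z hz hz' := by
    obtain ⟨f, ⟨hf, rfl⟩, hzf⟩ := mem_iUnion₂.1 hz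
    obtain ⟨f', ⟨hf', rfl⟩, hzf'⟩ := mem_iUnion₂.1 hz'
    obtain ⟨x, hx, hx', rfl⟩ := h.exists_of_mem hf hf' (ne_of_apply_ne label hne) hzf hzf'
    obtain ⟨v, rfl⟩ := hs.mem_range hf hf' hne hx hx'
    exact ⟨v, hs.mem_label hf hx, hs.mem_label hf' hx', rfl⟩

end Subdivision

section StraightEdges

open Set

variable {ι : Type*} {K : SimpleGraph ι} {a : ι → ℂ}

/-- The straight chords between the points `a i`, indexed by pairs of indices. -/
def chord (a : ι → ℂ) : Sym2 ι → Set ℂ :=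
  Sym2.lift ⟨fun i j => segment ℝ (a i) (a j), fun i j => segment_symm ℝ (a i) (a j)⟩

@[simp] theorem chord_mk (i j : ι) : chord a s(i, j) = segment ℝ (a i) (a j) := rfl

theorem norm_le_one_of_mem_chord (ha : ∀ i, ‖a i‖ = 1) {e : Sym2 ι} {z : ℂ} (hz : z ∈ chord a e) :
    ‖z‖ ≤ 1 := by
  induction e with | _ i j
  exact norm_le_one_of_mem_segment (ha i) (ha j) hz

theorem isGraphEmbedding_chord (ha : ∀ i, ‖a i‖ = 1) (hinj : Function.Injective a)
    (hK : ∀ ⦃i j k l⦄, K.Adj i j → K.Adj k l → k ∉ s(i, j) → l ∉ s(i, j) →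
      Disjoint (segment ℝ (a i) (a j)) (segment ℝ (a k) (a l))) :
    IsGraphEmbedding K a (chord a) where
  injective := hinj
  isArc i j hij := isArc_segment (hinj.ne hij.ne)
  mem_of_pos_mem e he w hw := by
    induction e with | _ i j
    rcases eq_or_eq_of_mem_segment (ha i) (ha j) (hinj.ne (Adj.ne he)) hw (ha w) with h | h
    · simp [hinj h]
    · simp [hinj h]
  exists_of_mem e f he hf hef z hze hzf := by
    have key {i k l : ι} (he : i ∈ e) (hkl : f = s(k, l)) (hi : i = k) : z = a i := by
      obtain ⟨j, rfl⟩ := he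
      subst hkl hi
      have hjl : j ≠ l := fun h => hef (by rw [h])
      exact eq_of_mem_segment_of_mem_segment (ha i) (ha j) (ha l)
        (hinj.ne (Adj.ne he)) (hinj.ne (Adj.ne hf)) (hinj.ne hjl) hze hzf
    induction f with | _ k l
    by_cases hk : k ∈ e
    · exact ⟨k, hk, by simp, key hk rfl rfl⟩
    by_cases hl : l ∈ e
    · exact ⟨l, hl, by simp, key hl Sym2.eq_swap rfl⟩
    induction e with | _ i j
    exact (disjoint_left.1 (hK he hf hk hl) hze hzf).elim

end StraightEdges

/-! ### Resolving a pair of crossed edges -/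

section CrossingPair

open Set Sum

/-- The two edges given by their ends, where `en (k, s)` is the end `s` of the edge `k`. -/
def pairedEdge {V : Type*} (en : Bool × Bool → V) (k : Bool) : Sym2 V :=
  s(en (k, false), en (k, true))

/-- The perfect matching joining the two ends of each of the two edges. -/
def pairing : SimpleGraph (Bool × Bool) := fromEdgeSet (range (pairedEdge id))

/-- The 4-cycle in which `(k, s)` and `(l, t)` are adjacent if and only if `k ≠ l`. -/
def circuit : SimpleGraph (Bool × Bool) := (⊤ : SimpleGraph Bool).comap Prod.fst

theorem pairing_adj {i j : Bool × Bool} : pairing.Adj i j ↔ i.1 = j.1 ∧ i.2 ≠ j.2 := by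
  revert i j
  simp [pairing, pairedEdge]

theorem circuit_adj {i j : Bool × Bool} : circuit.Adj i j ↔ i.1 ≠ j.1 := by
  simp [circuit]

variable {a : Bool × Bool → ℂ}

theorem isGraphEmbedding_pairing_chord (ha : ∀ i, ‖a i‖ = 1) (hinj : Function.Injective a)
    (hdisj : Disjoint (chord a (pairedEdge id false)) (chord a (pairedEdge id true))) :
    IsGraphEmbedding pairing a (chord a) := by
  refine isGraphEmbedding_chord ha hinj ?_
  rintro ⟨k, s⟩ ⟨k', s'⟩ ⟨l, t⟩ ⟨l', t'⟩ hij hkl hk hl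
  simp only [pairing_adj, Sym2.mem_iff, Prod.mk.injEq] at hij hkl hk hl
  obtain ⟨⟨rfl, hs⟩, rfl, ht⟩ := And.intro hij hkl
  obtain ⟨rfl, rfl, rfl⟩ : s' = !s ∧ l = !k ∧ t' = !t := by
    revert hs ht hk hl
    decide +revert
  simp only [pairedEdge, id, chord_mk] at hdisj
  cases k <;> cases s <;> cases t <;>
    simpa [segment_symm ℝ (a (_, true)) (a (_, false)), disjoint_comm] using hdisj

theorem side_mul_side_neg_of_not_disjoint (ha : ∀ i, ‖a i‖ = 1) (hinj : Function.Injective a)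
    (h : ¬ Disjoint (chord a (pairedEdge id false)) (chord a (pairedEdge id true)))
    {k s t : Bool} :
    side (a (k, s)) (a (k, !s)) (a (!k, t)) * side (a (k, s)) (a (k, !s)) (a (!k, !t)) < 0 := by
  obtain ⟨z, hz, hz'⟩ := not_disjoint_iff.1 h
  have hmem (k s : Bool) : z ∈ segment ℝ (a (k, s)) (a (k, !s)) := by
    cases k <;> cases s <;> first | assumption | rwa [segment_symm]
  refine side_mul_side_neg (ha _) (ha _) (ha _) (ha _) ?_ ?_ ?_ ?_ ?_ (hmem k s) (hmem (!k) t)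
  all_goals exact hinj.ne (by simp)

theorem isGraphEmbedding_circuit_chord (ha : ∀ i, ‖a i‖ = 1) (hinj : Function.Injective a)
    (h : ¬ Disjoint (chord a (pairedEdge id false)) (chord a (pairedEdge id true))) :
    IsGraphEmbedding circuit a (chord a) := by
  refine isGraphEmbedding_chord ha hinj ?_
  have hdisj (k s t : Bool) : Disjoint (segment ℝ (a (k, s)) (a (!k, t)))
      (segment ℝ (a (k, !s)) (a (!k, !t))) :=
    disjoint_segment (hinj.ne (by simp)) (side_mul_side_neg_of_not_disjoint ha hinj h)
  rintro ⟨k, s⟩ ⟨k', s'⟩ ⟨l, t⟩ ⟨l', t'⟩ hij hkl hk hl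
  rw [circuit_adj] at hij hkl
  rw [Sym2.mem_iff] at hk hl
  obtain ⟨rfl, ⟨rfl, rfl, rfl, rfl⟩ | ⟨rfl, rfl, rfl, rfl⟩⟩ : k' = !k ∧
      (k = l ∧ t = !s ∧ l' = !k ∧ t' = !s' ∨ l = !k ∧ t = !s' ∧ k = l' ∧ t' = !s) := by
    revert hij hkl hk hl
    decide +revert
  · exact hdisj k s s'
  · exact segment_symm ℝ (a (k, !s)) _ ▸ hdisj k s s'

end CrossingPair

section CrossedEdges

open Set Sum

variable {V : Type*} {G : SimpleGraph V} {en : Bool × Bool → V}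

/-- The graph obtained from `G` by cutting the two paired edges open in their middles, which leaves
a pendant edge at each of the four ends, and joining the four new vertices along `K`. -/
abbrev splice (G : SimpleGraph V) (en : Bool × Bool → V) (K : SimpleGraph (Bool × Bool)) :
    SimpleGraph (V ⊕ Bool × Bool) :=
  joinAlong (G.deleteEdges (range (pairedEdge en))) en K

/-- The edge of `G` that a given edge of `splice G en pairing` is a part of. -/
def subdividedEdge (en : Bool × Bool → V) : Sym2 (V ⊕ Bool × Bool) → Sym2 V :=
  joinElim id (fun i => pairedEdge en i.1) (Sym2.map en)

theorem mem_pairedEdge (i : Bool × Bool) : en i ∈ pairedEdge en i.1 := by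
  obtain ⟨k, _ | _⟩ := i <;> simp [pairedEdge]

theorem map_eq_pairedEdge {e : Sym2 (Bool × Bool)} (he : e ∈ pairing.edgeSet) {i : Bool × Bool}
    (hi : i ∈ e) : e.map en = pairedEdge en i.1 := by
  simp only [pairing, edgeSet_fromEdgeSet, mem_sdiff, mem_range] at he
  obtain ⟨⟨k, rfl⟩, -⟩ := he
  rcases Sym2.mem_iff.1 hi with rfl | rfl <;> rfl

theorem subdividedEdge_of_inr_mem {e : Sym2 (V ⊕ Bool × Bool)}
    (he : e ∈ (joinAlong G en pairing).edgeSet) {i : Bool × Bool} (hi : inr i ∈ e) :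
    subdividedEdge en e = pairedEdge en i.1 := by
  rcases mem_edgeSet_joinAlong he with ⟨e, -, rfl⟩ | ⟨j, rfl⟩ | ⟨e, he', rfl⟩
  · simp at hi
  · obtain rfl : i = j := by simpa using hi
    simp [subdividedEdge]
  · obtain ⟨j, hj, hji⟩ := Sym2.mem_map.1 hi
    obtain rfl := inr_injective hji
    simpa [subdividedEdge] using map_eq_pairedEdge he' hj

theorem mem_subdividedEdge_of_inl_mem {e : Sym2 (V ⊕ Bool × Bool)}
    (he : e ∈ (joinAlong G en pairing).edgeSet) {v : V} (hv : inl v ∈ e) :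
    v ∈ subdividedEdge en e := by
  rcases mem_edgeSet_joinAlong he with ⟨e, -, rfl⟩ | ⟨i, rfl⟩ | ⟨e, -, rfl⟩
  · simpa [subdividedEdge] using hv
  · obtain rfl : v = en i := by simpa using hv
    simpa [subdividedEdge] using mem_pairedEdge i
  · simp at hv

theorem mem_edgeSet_and_subdividedEdge_eq_iff (hinj : Function.Injective (pairedEdge en))
    {e : Sym2 (V ⊕ Bool × Bool)} (k s : Bool) :
    e ∈ (splice G en pairing).edgeSet ∧
      subdividedEdge en e = pairedEdge en k ↔ e = leg en (k, s) ∨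
        e = s(inr (k, s), inr (k, !s)) ∨ e = s(inr (k, !s), inl (en (k, !s))) := by
  constructor
  · rintro ⟨he, hk⟩
    rcases mem_edgeSet_joinAlong he with ⟨e, he', rfl⟩ | ⟨⟨l, t⟩, rfl⟩ | ⟨e, he', rfl⟩
    · rw [subdividedEdge, joinElim_map_inl, id] at hk
      rw [edgeSet_deleteEdges, hk] at he'
      exact absurd (mem_range_self k) he'.2
    · obtain rfl : l = k := hinj hk
      rcases Bool.eq_or_eq_not t s with rfl | rfl
      · exact Or.inl rfl
      · exact Or.inr (Or.inr Sym2.eq_swap)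
    · obtain ⟨⟨l, rfl⟩, -⟩ := (edgeSet_fromEdgeSet _).subset he'
      obtain rfl : l = k := hinj hk
      cases s
      · exact Or.inr (Or.inl rfl)
      · exact Or.inr (Or.inl Sym2.eq_swap)
  · have key {e : Sym2 (V ⊕ Bool × Bool)} (he : e ∈ (splice G en pairing).edgeSet)
        (hs : inr (k, s) ∈ e ∨ inr (k, !s) ∈ e) :=
      And.intro he (hs.elim (subdividedEdge_of_inr_mem he) (subdividedEdge_of_inr_mem he))
    rintro (rfl | rfl | rfl)
    · exact key rfl (by simp)
    · exact key (by simp [pairing_adj]) (by simp)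
    · exact key rfl (by simp)

theorem exists_isPath_subdividedEdge (hinj : Function.Injective (pairedEdge en)) {u v : V}
    (huv : G.Adj u v) :
    ∃ p : (splice G en pairing).Walk (inl u) (inl v),
      p.IsPath ∧ ∀ e, e ∈ p.edges ↔
        e ∈ (splice G en pairing).edgeSet ∧ subdividedEdge en e = s(u, v) := by
  by_cases h : ∃ k, pairedEdge en k = s(u, v)
  · obtain ⟨k, hk⟩ := h
    obtain ⟨s, rfl, rfl⟩ : ∃ s, en (k, s) = u ∧ en (k, !s) = v := by
      rcases Sym2.eq_iff.1 hk with ⟨rfl, rfl⟩ | ⟨rfl, rfl⟩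
      · exact ⟨false, rfl, rfl⟩
      · exact ⟨true, rfl, rfl⟩
    refine ⟨.cons (v := inr (k, s)) (joinAlong_adj_inl_inr.2 rfl) (.cons (v := inr (k, !s))
      (by simp [pairing_adj]) (.cons (joinAlong_adj_inr_inl.2 rfl) .nil)),
      by simp [huv.ne], fun e => ?_⟩
    rw [← hk, mem_edgeSet_and_subdividedEdge_eq_iff hinj k s]
    simp
  · have hadj : (G.deleteEdges (range (pairedEdge en))).Adj u v :=
      deleteEdges_adj.2 ⟨huv, h⟩
    refine ⟨.cons (joinAlong_adj_inl_inl.2 hadj) .nil, by simp [huv.ne], fun e => ?_⟩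
    rw [Walk.edges_cons, Walk.edges_nil, List.mem_singleton]
    refine ⟨fun he => he ▸ ⟨hadj, rfl⟩, fun ⟨he, hlabel⟩ => ?_⟩
    rcases mem_edgeSet_joinAlong he with ⟨e, -, rfl⟩ | ⟨i, rfl⟩ | ⟨e, he', rfl⟩
    · rw [subdividedEdge, joinElim_map_inl, id] at hlabel
      rw [hlabel, Sym2.map_mk]
    · exact (h ⟨i.1, hlabel⟩).elim
    · obtain ⟨⟨k, rfl⟩, -⟩ := (edgeSet_fromEdgeSet _).subset he'
      exact (h ⟨k, hlabel⟩).elim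

theorem isSubdivision_splice_pairing (hinj : Function.Injective (pairedEdge en)) :
    IsSubdivision G (splice G en pairing) inl
      (subdividedEdge en) where
  injective := inl_injective
  exists_path u v huv := exists_isPath_subdividedEdge hinj huv
  mem_label e he v := mem_subdividedEdge_of_inl_mem he
  mem_range e f he hf hef x hxe hxf := by
    obtain v | i := x
    · exact mem_range_self v
    · refine absurd ?_ hef
      rw [subdividedEdge_of_inr_mem he hxe, subdividedEdge_of_inr_mem hf hxf]

theorem IsGraphEmbedding.isPlanarGraph_of_complex {W : Type*} {H : SimpleGraph W} {pos : W → ℂ}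
    {A : Sym2 W → Set ℂ} (h : IsGraphEmbedding H pos A) : IsPlanarGraph H :=
  (h.image Complex.equivRealProdCLM.continuous Complex.equivRealProdCLM.injective).isPlanarGraph

variable {pos : V → ℂ} {B : Sym2 V → Set ℂ} {a : Bool × Bool → ℂ} {L : Bool × Bool → Set ℂ}

theorem IsLegSystem.isPlanarGraph_of_disjoint
    (h : IsLegSystem (G.deleteEdges (range (pairedEdge en))) en pos B a L)
    (hinj : Function.Injective (pairedEdge en))
    (hdisj : Disjoint (chord a (pairedEdge id false)) (chord a (pairedEdge id true))) :
    IsPlanarGraph G :=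
  have hK := isGraphEmbedding_pairing_chord h.norm_eq_one h.injective hdisj
  ((h.isGraphEmbedding_joinAlong hK fun _ _ _ => norm_le_one_of_mem_chord h.norm_eq_one
    ).of_isSubdivision (isSubdivision_splice_pairing hinj)).isPlanarGraph_of_complex

theorem IsLegSystem.isPlanarGraph_splice_circuit
    (h : IsLegSystem (G.deleteEdges (range (pairedEdge en))) en pos B a L)
    (hdisj : ¬ Disjoint (chord a (pairedEdge id false)) (chord a (pairedEdge id true))) :
    IsPlanarGraph (splice G en circuit) :=
  have hK := isGraphEmbedding_circuit_chord h.norm_eq_one h.injective hdisj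
  (h.isGraphEmbedding_joinAlong hK fun _ _ _ => norm_le_one_of_mem_chord h.norm_eq_one
    ).isPlanarGraph_of_complex

end CrossedEdges

section SpokeSystems

open Set Metric

variable {V ι E F : Type*} [TopologicalSpace E] [TopologicalSpace F] {G : SimpleGraph V}
  {en : ι → V}

/-- An embedding of `G` together with spokes `A i`, arcs from the vertices `en i` to the hub `p`
that are disjoint apart from their ends. The vertices `en i` need not be distinct, so this is an
embedding of a multigraph. -/
structure IsSpokeSystem (G : SimpleGraph V) (en : ι → V) (pos : V → E) (B : Sym2 V → Set E)
    (p : E) (A : ι → Set E) : Prop where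
  isGraphEmbedding : IsGraphEmbedding G pos B
  pos_ne : ∀ v, pos v ≠ p
  notMem : ∀ ⦃e⦄, e ∈ G.edgeSet → p ∉ B e
  isArc_spoke : ∀ i, IsArc (pos (en i)) p (A i)
  eq_of_pos_mem : ∀ ⦃i v⦄, pos v ∈ A i → v = en i
  eq_of_mem_of_mem_edge : ∀ ⦃i e⦄, e ∈ G.edgeSet → ∀ ⦃z⦄, z ∈ A i → z ∈ B e → z = pos (en i)
  eq_of_mem_of_mem : ∀ ⦃i j⦄, i ≠ j → ∀ ⦃z⦄, z ∈ A i → z ∈ A j → z = p ∨ z = pos (en i)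

namespace IsSpokeSystem

theorem image {pos : V → E} {B : Sym2 V → Set E} {p : E} {A : ι → Set E}
    (h : IsSpokeSystem G en pos B p A) {φ : E → F} (hφ : Continuous φ)
    (hinj : Function.Injective φ) :
    IsSpokeSystem G en (φ ∘ pos) (fun e => φ '' B e) (φ p) (fun i => φ '' A i) where
  isGraphEmbedding := h.isGraphEmbedding.image hφ hinj
  pos_ne v := hinj.ne (h.pos_ne v)
  notMem e he := hinj.mem_set_image.not.2 (h.notMem he)
  isArc_spoke i := (h.isArc_spoke i).image hφ hinj
  eq_of_pos_mem i v hv := h.eq_of_pos_mem (hinj.mem_set_image.1 hv)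
  eq_of_mem_of_mem_edge i e he := by
    rintro _ ⟨z, hz, rfl⟩ hz'
    exact congrArg φ (h.eq_of_mem_of_mem_edge he hz (hinj.mem_set_image.1 hz'))
  eq_of_mem_of_mem i j hij := by
    rintro _ ⟨z, hz, rfl⟩ hz'
    exact (h.eq_of_mem_of_mem hij hz (hinj.mem_set_image.1 hz')).imp (congrArg φ) (congrArg φ)

theorem exists_isLegSystem_of_one_lt_norm {pos : V → ℂ} {B : Sym2 V → Set ℂ} {A : ι → Set ℂ}
    (h : IsSpokeSystem G en pos B 0 A) (hpos : ∀ v, 1 < ‖pos v‖)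
    (hB : ∀ e ∈ G.edgeSet, ∀ z ∈ B e, 1 < ‖z‖) : ∃ a L, IsLegSystem G en pos B a L := by
  have hit (i : ι) := (h.isArc_spoke i).exists_first_hit (isClosed_closedBall (x := 0) (ε := 1))
    (by simpa using hpos (en i)) (mem_closedBall_self zero_le_one)
  simp only [frontier_closedBall (0 : ℂ) one_ne_zero, mem_sphere_zero_iff_norm] at hit
  choose a ha L hLA hL hLS using hit
  have eq_of_norm_le_one {i : ι} {z : ℂ} (hz : z ∈ L i) (hz1 : ‖z‖ ≤ 1) : z = a i := by
    rw [← mem_singleton_iff, ← hLS i]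
    exact ⟨hz, mem_closedBall_zero_iff.2 hz1⟩
  refine ⟨a, L, ⟨h.isGraphEmbedding, hpos, hB, ha, hL, fun _ _ => eq_of_norm_le_one,
    fun i v hv => h.eq_of_pos_mem (hLA i hv),
    fun i e he z hz => h.eq_of_mem_of_mem_edge he (hLA i hz), fun i j hij z hzi hzj => ?_⟩⟩
  refine (h.eq_of_mem_of_mem hij (hLA i hzi) (hLA j hzj)).resolve_left ?_
  rintro rfl
  have := ha i
  rw [← eq_of_norm_le_one hzi (by simp), norm_zero] at this
  exact zero_ne_one this

theorem exists_isLegSystem [Finite V] {pos : V → ℝ × ℝ} {B : Sym2 V → Set (ℝ × ℝ)} {p : ℝ × ℝ}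
    {A : ι → Set (ℝ × ℝ)} (h : IsSpokeSystem G en pos B p A) :
    ∃ pos B a L, IsLegSystem G en pos B a L := by
  let S : Set (ℝ × ℝ) := range pos ∪ ⋃ e ∈ G.edgeSet, B e
  have hS : IsClosed S := by
    refine (finite_range pos).isClosed.union ((toFinite _).isClosed_biUnion fun e he => ?_)
    induction e with | _ u v
    obtain ⟨γ, -, hγ⟩ := h.isGraphEmbedding.isArc he
    exact hγ ▸ (isCompact_range γ.continuous).isClosed
  have hp : p ∉ S := by
    simpa [S, h.pos_ne] using fun e he => h.notMem he
  let ψ : ℝ × ℝ ≃ₜ ℂ := Complex.equivRealProdCLM.symm.toHomeomorph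
  obtain ⟨r, hr, hball⟩ := nhds_basis_closedBall.mem_iff.1
    ((ψ.isClosedMap S hS).isOpen_compl.mem_nhds (ψ.injective.mem_set_image.not.2 hp))
  let φ (z : ℝ × ℝ) : ℂ := r⁻¹ • (ψ z - ψ p)
  have hφ : Continuous φ := by fun_prop
  have hinj : Function.Injective φ := fun z w hzw =>
    ψ.injective (sub_left_injective (smul_right_injective ℂ (inv_ne_zero hr.ne') hzw))
  have hnorm {z : ℝ × ℝ} (hz : z ∈ S) : 1 < ‖φ z‖ := by
    have hlt : r < ‖ψ z - ψ p‖ := by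
      by_contra! hle
      exact hball (mem_closedBall_iff_norm.2 hle) (mem_image_of_mem ψ hz)
    rwa [norm_smul, norm_inv, Real.norm_of_nonneg hr.le, lt_inv_mul_iff₀ hr, mul_one]
  have h0 : φ p = 0 := by simp [φ]
  have h' := h.image hφ hinj
  rw [h0] at h'
  refine ⟨_, _, h'.exists_isLegSystem_of_one_lt_norm
    (fun v => hnorm (Or.inl (mem_range_self v))) ?_⟩
  rintro e he _ ⟨z, hz, rfl⟩
  exact hnorm (Or.inr (mem_biUnion he hz))

end IsSpokeSystem

end SpokeSystems

section Crossing

open Set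

variable {V : Type*} {G : SimpleGraph V} {d : Drawing G}

theorem Drawing.OneCrossing.exists_crossing (hd : d.OneCrossing) :
    ∃ (X : Bool → G.edgeSet) (p : ℝ × ℝ), Function.Injective X ∧ (∀ k, p ∈ d.arcInt (X k)) ∧
      (∀ k l, k ≠ l → ∀ z ∈ d.arcInt (X k) ∩ d.arcInt (X l), z = p) ∧
      ∀ g ∉ range X, ∀ g', g ≠ g' → Disjoint (d.arcInt g) (d.arcInt g') := by
  obtain ⟨e, f, hef, ⟨p, hp, huniq⟩, hrest⟩ := hd
  refine ⟨fun k => cond k f e, p, ?_, ?_, ?_, fun g hg g' hne => ?_⟩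
  · simpa [Function.Injective] using ⟨hef, hef.symm⟩
  · simpa using hp
  · rintro (_ | _) (_ | _) hkl z hz
    exacts [absurd rfl hkl, huniq z hz, huniq z hz.symm, absurd rfl hkl]
  · refine disjoint_iff_inter_eq_empty.2 (hrest g g' hne fun hpair => hg ?_)
    rcases hpair.subset (mem_insert g {g'}) with rfl | rfl
    exacts [⟨false, rfl⟩, ⟨true, rfl⟩]

theorem Drawing.exists_half_arcs {e : G.edgeSet} {p : ℝ × ℝ} (hp : p ∈ d.arcInt e) :
    ∃ (en : Bool → V) (A : Bool → Set (ℝ × ℝ)), (e : Sym2 V) = s(en false, en true) ∧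
      (∀ s, IsArc (d.vpos (en s)) p (A s)) ∧ (∀ s, A s ⊆ d.closedArc e) ∧
      (∀ s t, s ≠ t → A s ∩ A t = {p}) ∧ ∀ s v, d.vpos v ∈ A s → v = en s := by
  obtain ⟨⟨u, v⟩, huv⟩ := e
  have hpv (w : V) : p ≠ d.vpos w := fun h => d.vpos_notMem_arcInt _ w (h ▸ hp)
  obtain ⟨A₁, A₂, h₁, h₂, hunion, hinter⟩ := (d.isArc_closedArc huv).exists_isArc_isArc
    (d.mem_closedArc.2 (Or.inl hp)) (hpv u) (hpv v)
  have hsub₁ : A₁ ⊆ d.closedArc s(u, v) := hunion ▸ subset_union_left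
  have hsub₂ : A₂ ⊆ d.closedArc s(u, v) := hunion ▸ subset_union_right
  have hends {w : V} (hw : d.vpos w ∈ d.closedArc s(u, v)) : w = u ∨ w = v :=
    Sym2.mem_iff.1 (d.mem_of_vpos_mem_closedArc (e := ⟨s(u, v), huv⟩) hw)
  have heq {w : V} (hw₁ : d.vpos w ∈ A₁) (hw₂ : d.vpos w ∈ A₂) : False :=
    hpv w (hinter.subset ⟨hw₁, hw₂⟩).symm
  refine ⟨fun s => cond s v u, fun s => cond s A₂ A₁, rfl, ?_, ?_, ?_, ?_⟩
  · simpa using ⟨h₁, h₂⟩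
  · simpa using ⟨hsub₁, hsub₂⟩
  · simpa [inter_comm A₂] using hinter
  · rintro (_ | _) w hw
    · exact (hends (hsub₁ hw)).resolve_right fun h => heq hw (h ▸ h₂.left_mem)
    · exact (hends (hsub₂ hw)).resolve_left fun h => heq (h ▸ h₁.left_mem) hw

theorem Drawing.OneCrossing.exists_isSpokeSystem (hd : d.OneCrossing) :
    ∃ en : Bool × Bool → V, (∀ k, pairedEdge en k ∈ G.edgeSet) ∧
      Function.Injective (pairedEdge en) ∧ ∃ p A, IsSpokeSystem
        (G.deleteEdges (range (pairedEdge en))) en d.vpos d.closedArc p A := by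
  obtain ⟨X, p, hX, hp, huniq, hrest⟩ := hd.exists_crossing
  choose en A hen hA hsub hinter eq_en using fun k => d.exists_half_arcs (hp k)
  let en' (i : Bool × Bool) : V := en i.1 i.2
  have hpair : pairedEdge en' = fun k => (X k : Sym2 V) := funext fun k => (hen k).symm
  have hp_ne (v : V) : d.vpos v ≠ p := fun h => d.vpos_notMem_arcInt (X true) v (h ▸ hp true)
  have eq_vpos {k s : Bool} {z : ℝ × ℝ} (hz : z ∈ A k s) {f : G.edgeSet} (hzf : z ∈ d.closedArc f)
      (hdisj : z ∉ d.arcInt (X k) ∩ d.arcInt f) : z = d.vpos (en k s) := by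
    obtain ⟨v, -, -, rfl⟩ := d.exists_of_mem_closedArc (hsub k s hz) hzf hdisj
    rw [eq_en k s v hz]
  have lift_mem {e : Sym2 V} (he : e ∈ (G.deleteEdges (range (pairedEdge en'))).edgeSet) :
      ∃ g : G.edgeSet, g = e ∧ g ∉ range X := by
    rw [edgeSet_deleteEdges, hpair] at he
    exact ⟨⟨e, he.1⟩, rfl, fun ⟨k, hk⟩ => he.2 ⟨k, congrArg Subtype.val hk⟩⟩
  refine ⟨en', hpair ▸ fun k => (X k).2, hpair ▸ Subtype.val_injective.comp hX, p,
    fun i => A i.1 i.2, d.isGraphEmbedding (deleteEdges_le _) fun e f hef he _ => ?_, hp_ne, ?_,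
    fun i => hA i.1 i.2, fun i => eq_en i.1 i.2, ?_, ?_⟩
  · obtain ⟨g, hg, hgX⟩ := lift_mem he
    obtain rfl := Subtype.ext hg
    exact hrest g hgX f hef
  · rintro _ he hpe
    obtain ⟨g, rfl, hgX⟩ := lift_mem he
    rcases d.mem_closedArc.1 hpe with hpg | ⟨v, -, hv⟩
    · exact disjoint_left.1 (hrest g hgX (X true) fun h => hgX ⟨true, h.symm⟩) hpg (hp true)
    · exact hp_ne v hv.symm
  · rintro ⟨k, s⟩ _ he z hz hze
    obtain ⟨g, rfl, hgX⟩ := lift_mem he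
    exact eq_vpos hz hze fun h => disjoint_left.1 (hrest g hgX (X k) fun h => hgX ⟨k, h.symm⟩)
      h.2 h.1
  · rintro ⟨k, s⟩ ⟨l, t⟩ hij z hzi hzj
    rcases eq_or_ne k l with rfl | hkl
    · exact Or.inl ((hinter k s t fun h => hij (by rw [h])).subset ⟨hzi, hzj⟩)
    · exact or_iff_not_imp_left.2 fun hzp => eq_vpos hzi (hsub l t hzj) (mt (huniq k l hkl z) hzp)

end Crossing

/-! ### Connectivity and degrees -/

section TwoEdgeConnected

open Set Sum

variable {V : Type*} {G : SimpleGraph V} {en : Bool × Bool → V} {K : SimpleGraph (Bool × Bool)}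

theorem twoEdgeConnected_iff : TwoEdgeConnected G ↔ Nonempty V ∧ G.IsEdgeConnected 2 := by
  rw [isEdgeConnected_two]
  constructor
  · rintro ⟨hconn, hbridge⟩
    refine ⟨hconn.nonempty, fun e => ?_⟩
    by_cases he : e ∈ G.edgeSet
    · induction e with | _ u v
      exact (hconn.connected_delete_edge_of_not_isBridge (hbridge _ he)).preconnected
    · rw [deleteEdges_eq_self.2 (by simpa using he)]
      exact hconn.preconnected
  · rintro ⟨hne, h⟩
    refine ⟨⟨(h s(hne.some, hne.some)).mono (deleteEdges_le _)⟩, fun e _ hbr => ?_⟩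
    induction e with | _ u v
    exact isBridge_iff.1 hbr (h _ u v)

theorem isEdgeConnected_circuit : circuit.IsEdgeConnected 2 := by
  rw [isEdgeConnected_two]
  intro e
  have reachable_of_ne {k l : Bool} (hkl : k ≠ l) (s t : Bool) :
      (circuit.deleteEdges {e}).Reachable (k, s) (l, t) := by
    have hadj {s' t' : Bool} (h : s((k, s'), (l, t')) ≠ e) :
        (circuit.deleteEdges {e}).Adj (k, s') (l, t') :=
      deleteEdges_adj.2 ⟨circuit_adj.2 hkl, h⟩
    by_cases he : s((k, s), (l, t)) = e
    · refine ((hadj (t' := !t) ?_).reachable.trans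
        (hadj (s' := !s) ?_).symm.reachable).trans (hadj ?_).reachable <;> simp [← he, hkl]
    · exact (hadj he).reachable
  rintro ⟨k, s⟩ ⟨l, t⟩
  by_cases hkl : k = l
  · subst hkl
    exact (reachable_of_ne (by simp) s false).trans (reachable_of_ne (Bool.not_ne_self k) false t)
  · exact reachable_of_ne hkl s t

theorem reachable_of_forall_adj {W : Type*} {H : SimpleGraph W} {f : V → W}
    (hf : ∀ u v, G.Adj u v → H.Reachable (f u) (f v)) {u v : V} (huv : G.Reachable u v) :
    H.Reachable (f u) (f v) := by
  obtain ⟨p⟩ := huv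
  induction p with
  | nil => exact .rfl
  | cons hadj _ ih => exact (hf _ _ hadj).trans ih

theorem reachable_inr_deleteEdges_joinAlong {ι : Type*} {en : ι → V} {K : SimpleGraph ι}
    (hK : K.IsEdgeConnected 2) (x : Sym2 (V ⊕ ι)) (i j : ι) :
    ((joinAlong G en K).deleteEdges {x}).Reachable (inr i) (inr j) := by
  have hcard : (Sym2.map inr ⁻¹' {x} : Set (Sym2 ι)).encard < 2 :=
    (encard_le_one_iff.2 fun e f he hf => Sym2.map.injective inr_injective
      (he.trans hf.symm)).trans_lt (by norm_num)
  refine (hK i j hcard).map ⟨inr, fun {i j} h => ?_⟩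
  rw [deleteEdges_adj] at h ⊢
  exact h

theorem isEdgeConnected_splice (hG : G.IsEdgeConnected 2) (hK : K.IsEdgeConnected 2) :
    (splice G en K).IsEdgeConnected 2 := by
  rw [isEdgeConnected_two]
  intro x
  set H := (splice G en K).deleteEdges {x}
  have hinr (i j : Bool × Bool) : H.Reachable (inr i) (inr j) :=
    reachable_inr_deleteEdges_joinAlong hK x i j
  have hleg {i : Bool × Bool} (hi : leg en i ≠ x) :
      H.Reachable (inl (en i)) (inr i) :=
    Adj.reachable (deleteEdges_adj.2 ⟨joinAlong_adj_inl_inr.2 rfl, hi⟩)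
  have hinl (u v : V) : H.Reachable (inl u) (inl v) := by
    refine reachable_of_forall_adj (fun u v huv => ?_)
      (isEdgeConnected_two.1 hG (subdividedEdge en x) u v)
    obtain ⟨huv, hne⟩ := deleteEdges_adj.1 huv
    by_cases hk : ∃ k, pairedEdge en k = s(u, v)
    · obtain ⟨k, hk⟩ := hk
      have hleg' (s : Bool) : H.Reachable (inl (en (k, s))) (inr (k, s)) :=
        hleg fun h => hne (hk ▸ congrArg (subdividedEdge en) h)
      have hends (s t : Bool) : H.Reachable (inl (en (k, s))) (inl (en (k, t))) :=
        ((hleg' s).trans (hinr _ _)).trans (hleg' t).symm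
      rcases Sym2.eq_iff.1 hk with ⟨rfl, rfl⟩ | ⟨rfl, rfl⟩
      exacts [hends false true, hends true false]
    · refine Adj.reachable (deleteEdges_adj.2 ⟨deleteEdges_adj.2 ⟨huv, hk⟩, fun h => hne ?_⟩)
      exact congrArg (subdividedEdge en) h
  obtain ⟨i, hi⟩ : ∃ i, leg en i ≠ x := by
    by_contra! h
    simpa using (h (false, false)).trans (h (false, true)).symm
  have hcross (v : V) (j : Bool × Bool) : H.Reachable (inl v) (inr j) :=
    ((hinl v (en i)).trans (hleg hi)).trans (hinr i j)
  rintro (u | i) (v | j)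
  exacts [hinl u v, hcross u j, (hcross v i).symm, hinr i j]

end TwoEdgeConnected

section Incidence

open Set Sum

variable {V : Type*} {G : SimpleGraph V}

theorem ncard_incidenceSet (v : V) [Fintype (G.neighborSet v)] :
    (G.incidenceSet v).ncard = G.degree v := by
  classical
  rw [← card_incidenceSet_eq_degree, ← Nat.card_eq_fintype_card, Nat.card_coe_set_eq]

theorem mem_incidenceSet_inl {ι : Type*} {en : ι → V} {K : SimpleGraph ι} {v : V}
    {e : Sym2 (V ⊕ ι)} : e ∈ (joinAlong G en K).incidenceSet (inl v) ↔
      (∃ f ∈ G.incidenceSet v, f.map inl = e) ∨ ∃ i, en i = v ∧ leg en i = e := by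
  constructor
  · rintro ⟨he, hv⟩
    rcases mem_edgeSet_joinAlong he with ⟨e, he', rfl⟩ | ⟨i, rfl⟩ | ⟨e, -, rfl⟩
    · exact Or.inl ⟨e, ⟨he', by simpa using hv⟩, rfl⟩
    · exact Or.inr ⟨i, by simpa [eq_comm] using hv, rfl⟩
    · simp at hv
  · rintro (⟨f, hf, rfl⟩ | ⟨i, rfl, rfl⟩)
    · refine ⟨?_, by simpa using hf.2⟩
      induction f with | _ u w
      exact hf.1
    · exact ⟨leg_mem_edgeSet _, by simp⟩

theorem incidenceSet_inr {ι : Type*} {en : ι → V} (i : ι) :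
    (joinAlong G en ⊥).incidenceSet (inr i) = {leg en i} := by
  ext e
  constructor
  · rintro ⟨he, hi⟩
    rcases mem_edgeSet_joinAlong he with ⟨e, -, rfl⟩ | ⟨j, rfl⟩ | ⟨e, he', rfl⟩
    · simp at hi
    · obtain rfl : i = j := by simpa using hi
      rfl
    · simp at he'
  · rintro rfl
    exact ⟨leg_mem_edgeSet _, by simp⟩

variable {en : Bool × Bool → V} {K : SimpleGraph (Bool × Bool)}

theorem bijOn_subdividedEdge (hmem : ∀ k, pairedEdge en k ∈ G.edgeSet)
    (hinj : Function.Injective (pairedEdge en)) (v : V) :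
    BijOn (subdividedEdge en) ((splice G en K).incidenceSet (inl v)) (G.incidenceSet v) := by
  have eq_of_en_eq {i j : Bool × Bool} (hij : en i = en j)
      (he : pairedEdge en i.1 = pairedEdge en j.1) : i = j := by
    obtain ⟨k, s⟩ := i
    obtain ⟨l, t⟩ := j
    obtain rfl := hinj he
    have hne : en (k, false) ≠ en (k, true) := Adj.ne (hmem k)
    revert hij
    cases s <;> cases t <;> simp [hne, hne.symm]
  have mem_iff {e : Sym2 V} : e ∈ (G.deleteEdges (range (pairedEdge en))).incidenceSet v ↔
      e ∈ G.incidenceSet v ∧ e ∉ range (pairedEdge en) := by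
    rw [incidenceSet, edgeSet_deleteEdges]
    exact and_right_comm
  refine ⟨fun e he => ?_, fun e he f hf hef => ?_, fun e he => ?_⟩
  · rcases mem_incidenceSet_inl.1 he with ⟨e, he', rfl⟩ | ⟨i, rfl, rfl⟩
    · simpa [subdividedEdge] using (mem_iff.1 he').1
    · exact ⟨hmem _, mem_pairedEdge i⟩
  · rcases mem_incidenceSet_inl.1 he with ⟨e, he', rfl⟩ | ⟨i, hi, rfl⟩ <;>
      rcases mem_incidenceSet_inl.1 hf with ⟨f, hf', rfl⟩ | ⟨j, hj, rfl⟩ <;>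
      simp only [subdividedEdge, joinElim_leg, joinElim_map_inl, id] at hef
    · rw [hef]
    · exact ((mem_iff.1 he').2 ⟨j.1, hef.symm⟩).elim
    · exact ((mem_iff.1 hf').2 ⟨i.1, hef⟩).elim
    · rw [eq_of_en_eq (hi.trans hj.symm) hef]
  · by_cases hk : e ∈ range (pairedEdge en)
    · obtain ⟨k, rfl⟩ := hk
      obtain ⟨s, rfl⟩ : ∃ s, en (k, s) = v := by
        rcases Sym2.mem_iff.1 he.2 with rfl | rfl
        exacts [⟨_, rfl⟩, ⟨_, rfl⟩]
      exact ⟨_, mem_incidenceSet_inl.2 (Or.inr ⟨(k, s), rfl, rfl⟩), rfl⟩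
    · exact ⟨_, mem_incidenceSet_inl.2 (Or.inl ⟨e, mem_iff.2 ⟨he, hk⟩, rfl⟩),
        by simp [subdividedEdge]⟩

theorem ncard_incidenceSet_splice_inl (hmem : ∀ k, pairedEdge en k ∈ G.edgeSet)
    (hinj : Function.Injective (pairedEdge en)) (v : V) :
    ((splice G en K).incidenceSet (inl v)).ncard = (G.incidenceSet v).ncard := by
  have h := bijOn_subdividedEdge (K := K) hmem hinj v
  rw [← h.image_eq, h.injOn.ncard_image]

theorem ncard_incidenceSet_splice_circuit_inr (i : Bool × Bool) :
    ((splice G en circuit).incidenceSet (inr i)).ncard = 3 := by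
  obtain ⟨k, s⟩ := i
  suffices (splice G en circuit).incidenceSet (inr (k, s)) = {leg en (k, s),
      s(inr (k, s), inr (!k, false)), s(inr (k, s), inr (!k, true))} by
    rw [this, ncard_eq_three]
    exact ⟨_, _, _, by simp, by simp, by simp, rfl⟩
  ext e
  constructor
  · rintro ⟨he, y, rfl⟩
    rcases y with v | ⟨l, t⟩
    · rw [mem_edgeSet, joinAlong_adj_inr_inl] at he
      exact Or.inl (he ▸ Sym2.eq_swap)
    · rw [mem_edgeSet, joinAlong_adj_inr_inr, circuit_adj] at he
      obtain rfl : l = !k := Bool.eq_not_of_ne he.symm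
      cases t <;> simp
  · rintro (rfl | rfl | rfl)
    · exact ⟨leg_mem_edgeSet _, by simp⟩
    all_goals exact ⟨by simp [circuit_adj], by simp⟩

end Incidence

/-! ### Edge colourings and Kempe chains -/

section EdgeColoring

open Set

variable {V α : Type*} {G : SimpleGraph V} {c : Sym2 V → α}

/-- `c` is a proper edge colouring of `G`: edges of `G` with a common end have distinct colours.
Colours are given to all unordered pairs, those of non-edges being irrelevant. -/
def IsEdgeColoring (G : SimpleGraph V) (c : Sym2 V → α) : Prop :=
  ∀ v, InjOn c (G.incidenceSet v)

theorem threeEdgeColorable_iff :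
    ThreeEdgeColorable G ↔ ∃ c : Sym2 V → Fin 3, IsEdgeColoring G c := by
  classical
  constructor
  · rintro ⟨c, hc⟩
    refine ⟨fun e => if he : e ∈ G.edgeSet then c ⟨e, he⟩ else 0, fun v e he f hf hef => ?_⟩
    by_contra hne
    simp only [dif_pos he.1, dif_pos hf.1] at hef
    exact hc ⟨e, he.1⟩ ⟨f, hf.1⟩ (by simpa using hne) ⟨v, he.2, hf.2⟩ hef
  · rintro ⟨c, hc⟩
    exact ⟨fun e => c e, fun e f hne ⟨v, he, hf⟩ hef =>
      hne (Subtype.ext (hc v ⟨e.2, he⟩ ⟨f.2, hf⟩ hef))⟩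

theorem IsEdgeColoring.mono (hc : IsEdgeColoring G c) {H : SimpleGraph V} (h : H ≤ G) :
    IsEdgeColoring H c := fun v _ he _ hf =>
  hc v ⟨edgeSet_mono h he.1, he.2⟩ ⟨edgeSet_mono h hf.1, hf.2⟩

/-- The spanning subgraph of `G` whose edges are those with a colour in `A`. -/
def colorSubgraph (G : SimpleGraph V) (c : Sym2 V → α) (A : Set α) : SimpleGraph V :=
  G.deleteEdges (c ⁻¹' A)ᶜ

theorem colorSubgraph_adj {A : Set α} {u v : V} :
    (colorSubgraph G c A).Adj u v ↔ G.Adj u v ∧ c s(u, v) ∈ A := by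
  simp [colorSubgraph]

theorem colorSubgraph_le (A : Set α) : colorSubgraph G c A ≤ G := deleteEdges_le _

theorem incidenceSet_colorSubgraph (A : Set α) (v : V) :
    (colorSubgraph G c A).incidenceSet v = G.incidenceSet v ∩ c ⁻¹' A := by
  rw [incidenceSet, colorSubgraph, edgeSet_deleteEdges, sdiff_eq, compl_compl]
  ext e
  exact and_right_comm

theorem IsEdgeColoring.degree_colorSubgraph (hc : IsEdgeColoring G c) (A : Set α) (v : V)
    [Fintype ((colorSubgraph G c A).neighborSet v)] :
    (colorSubgraph G c A).degree v = (c '' G.incidenceSet v ∩ A).ncard := by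
  rw [← ncard_incidenceSet, incidenceSet_colorSubgraph, ← image_inter_preimage,
    ((hc v).mono inter_subset_left).ncard_image]

theorem IsEdgeColoring.image_incidenceSet {c : Sym2 V → Fin 3} (hc : IsEdgeColoring G c) {v : V}
    (hv : (G.incidenceSet v).ncard = 3) : c '' G.incidenceSet v = univ := by
  refine eq_of_subset_of_ncard_le (subset_univ _) ?_
  rw [(hc v).ncard_image, hv, ncard_univ, Nat.card_fin]

/-- Kempe exchange: the colours `x` and `y` are swapped on a union of Kempe chains with vertex
set `C`. -/
theorem IsEdgeColoring.exists_swap [DecidableEq α] (hc : IsEdgeColoring G c) {x y : α} {C : Set V}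
    (hC : ∀ u v, (colorSubgraph G c {x, y}).Adj u v → u ∈ C → v ∈ C) :
    ∃ c' : Sym2 V → α, IsEdgeColoring G c' ∧ ∀ v, ∀ e ∈ G.incidenceSet v,
      (v ∈ C → c' e = Equiv.swap x y (c e)) ∧ (v ∉ C → c' e = c e) := by
  classical
  let c' : Sym2 V → α := fun e => if ∃ v ∈ e, v ∈ C then Equiv.swap x y (c e) else c e
  have swap_of_mem {v : V} {e : Sym2 V} (he : e ∈ G.incidenceSet v) (hv : v ∈ C) :
      c' e = Equiv.swap x y (c e) := if_pos ⟨v, he.2, hv⟩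
  have eq_of_notMem {v : V} {e : Sym2 V} (he : e ∈ G.incidenceSet v) (hv : v ∉ C) :
      c' e = c e := by
    by_cases hex : ∃ w ∈ e, w ∈ C
    · obtain ⟨w, hwe, hw⟩ := hex
      rw [swap_of_mem ⟨he.1, hwe⟩ hw]
      have hne : c e ∉ ({x, y} : Set α) := fun hxy => hv (hC w v ?_ hw)
      · simp only [mem_insert_iff, mem_singleton_iff, not_or] at hne
        exact Equiv.swap_apply_of_ne_of_ne hne.1 hne.2
      · obtain rfl : e = s(w, v) :=
          (Sym2.mem_and_mem_iff (by rintro rfl; exact hv hw)).1 ⟨hwe, he.2⟩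
        exact colorSubgraph_adj.2 ⟨he.1, hxy⟩
    · exact if_neg hex
  refine ⟨c', fun v => ?_, fun v e he => ⟨swap_of_mem he, eq_of_notMem he⟩⟩
  by_cases hv : v ∈ C
  · exact ((Equiv.injective _).comp_injOn (hc v)).congr fun e he => (swap_of_mem he hv).symm
  · exact (hc v).congr fun e he => (eq_of_notMem he hv).symm

end EdgeColoring

section Leaves

open Finset

variable {V : Type*} [Fintype V] {G : SimpleGraph V} [DecidableRel G.Adj]

theorem card_le_two_of_connected (hG : G.Connected) (hdeg : ∀ v, G.degree v ≤ 2) {S : Finset V}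
    (hS : ∀ v ∈ S, G.degree v ≤ 1) : #S ≤ 2 := by
  classical
  have hedges : Fintype.card V ≤ #G.edgeFinset + 1 := by
    simpa [edgeFinset_card] using hG.card_vert_le_card_edgeSet_add_one
  have hsum : ∑ v, (G.degree v + if v ∈ S then 1 else 0) ≤ ∑ _v : V, 2 := by
    refine sum_le_sum fun v _ => ?_
    split_ifs with hv
    · exact Nat.succ_le_succ (hS v hv)
    · exact hdeg v
  rw [sum_add_distrib, G.sum_degrees_eq_twice_card_edges, sum_boole, sum_const, card_univ,
    filter_mem_eq_inter, univ_inter, smul_eq_mul] at hsum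
  simp only [Nat.cast_id] at hsum
  omega

theorem card_le_two_of_reachable (hdeg : ∀ v, G.degree v ≤ 2) {S : Finset V}
    (hS : ∀ v ∈ S, G.degree v ≤ 1) {u : V} (hu : ∀ v ∈ S, G.Reachable v u) : #S ≤ 2 := by
  classical
  let C := G.connectedComponentMk u
  have hdegC (v : C.supp) : (G.induce C.supp).degree v = G.degree v :=
    degree_induce_of_neighborSet_subset fun _ => C.mem_supp_of_adj_mem_supp v.2
  have hSC : ∀ v ∈ S, v ∈ C.supp := fun v hv => ConnectedComponent.sound (hu v hv)
  rw [← filter_true_of_mem hSC, ← card_subtype]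
  refine card_le_two_of_connected (G := G.induce C.supp) C.connected_toSimpleGraph
    (fun v => (hdegC v).trans_le (hdeg v)) fun v hv => ?_
  rw [hdegC]
  exact hS v (mem_subtype.1 hv)

end Leaves

section PendantColors

open Finset Sum

variable {V ι : Type*} {G : SimpleGraph V} {en : ι → V} {c : Sym2 (V ⊕ ι) → Fin 3}

theorem IsEdgeColoring.even_card_add_card_leg [Fintype V] [Fintype ι]
    (hc : IsEdgeColoring (joinAlong G en ⊥) c)
    (hcubic : ∀ v, ((joinAlong G en ⊥).incidenceSet (inl v)).ncard = 3) (a : Fin 3) :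
    Even (Fintype.card V + #{i | c (leg en i) = a}) := by
  classical
  have hinl (v : V) : (colorSubgraph (joinAlong G en ⊥) c {a}).degree (inl v) = 1 := by
    rw [hc.degree_colorSubgraph, hc.image_incidenceSet (hcubic v), Set.univ_inter,
      Set.ncard_singleton]
  have hinr (i : ι) : Odd ((colorSubgraph (joinAlong G en ⊥) c {a}).degree (inr i)) ↔
      c (leg en i) = a := by
    rw [hc.degree_colorSubgraph, incidenceSet_inr, Set.image_singleton]
    by_cases hi : c (leg en i) = a
    · simp [hi]
    · simp [Set.singleton_inter_eq_empty.2 (show c (leg en i) ∉ ({a} : Set _) from hi), hi]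
  have := (colorSubgraph (joinAlong G en ⊥) c {a}).even_card_odd_degree_vertices
  rw [card_filter, Fintype.sum_sum_type, ← card_filter, ← card_filter] at this
  simpa [hinl, hinr] using this

theorem forall_eq_or_exists_forall_mk_eq {q : Bool × Bool → Fin 3} {n : ℕ}
    (hq : ∀ a, Even (n + #{i | q i = a})) : (∀ k, q (k, false) = q (k, true)) ∨
      ∃ x y, x ≠ y ∧ ∀ k, s(q (k, false), q (k, true)) = s(x, y) := by
  have heven (a b : Fin 3) := (Nat.even_add.1 (hq a)).symm.trans (Nat.even_add.1 (hq b))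
  simp only [card_filter, Fintype.sum_prod_type, Fintype.sum_bool] at heven
  simp only [Bool.forall_bool]
  generalize q (false, false) = q₀, q (false, true) = q₁, q (true, false) = q₂,
    q (true, true) = q₃ at heven ⊢
  revert q₀ q₁ q₂ q₃
  decide

end PendantColors

section KempeChains

open Set Sum

theorem IsGraphEmbedding.reachable_of_side_mul_side_neg {W : Type*} {H : SimpleGraph W}
    {pos : W → ℂ} {A : Sym2 W → Set ℂ} (h : IsGraphEmbedding H pos A)
    (hA : ∀ e ∈ H.edgeSet, ∀ z ∈ A e, 1 ≤ ‖z‖) {u v x y : W} (hu : ‖pos u‖ = 1)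
    (hv : ‖pos v‖ = 1) (hx : ‖pos x‖ = 1) (hy : ‖pos y‖ = 1)
    (hside : side (pos u) (pos v) (pos x) * side (pos u) (pos v) (pos y) < 0)
    (huv : H.Reachable u v) (hxy : H.Reachable x y) : H.Reachable u x := by
  classical
  have exists_path {s t : W} (hst : H.Reachable s t) (hne : s ≠ t) :
      ∃ γ : Path (pos s) (pos t), ∀ r, 1 ≤ ‖γ r‖ ∧
        ∃ e ∈ H.edgeSet, γ r ∈ A e ∧ ∀ w ∈ e, H.Reachable s w := by
    obtain ⟨p, hp⟩ := hst.exists_isPath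
    obtain ⟨γ, -, hγ⟩ := h.isArc_iUnion_edges p hp hne
    refine ⟨γ, fun r => ?_⟩
    obtain ⟨e, he, hr⟩ := mem_iUnion₂.1 (hγ.subset (mem_range_self r))
    have he' := p.edges_subset_edgeSet he
    exact ⟨hA e he' _ hr, e, he', hr, fun w hw =>
      ⟨p.takeUntil w (p.mem_support_of_mem_edges he hw)⟩⟩
  have huv' : u ≠ v := by
    rintro rfl
    simp [side] at hside
  have hxy' : x ≠ y := by
    rintro rfl
    exact hside.not_ge (mul_self_nonneg _)
  obtain ⟨γ, hγ⟩ := exists_path huv huv'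
  obtain ⟨δ, hδ⟩ := exists_path hxy hxy'
  obtain ⟨s, t, hst⟩ := exists_eq_of_one_le_norm hu hv hx hy hside γ δ (fun r => (hγ r).1)
    fun r => (hδ r).1
  obtain ⟨-, e, he, hse, hue⟩ := hγ s
  obtain ⟨-, f, hf, htf, hxf⟩ := hδ t
  obtain ⟨w, hwe, hwf⟩ : ∃ w ∈ e, w ∈ f := by
    by_cases hef : e = f
    · subst hef
      exact ⟨_, e.out_fst_mem, e.out_fst_mem⟩
    · obtain ⟨w, hwe, hwf, -⟩ := h.exists_of_mem he hf hef hse (hst ▸ htf)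
      exact ⟨w, hwe, hwf⟩
  exact (hue w hwe).trans (hxf w hwf).symm

variable {V : Type*} {G : SimpleGraph V} {en : Bool × Bool → V}

theorem IsLegSystem.reachable_of_reachable {pos : V → ℂ} {B : Sym2 V → Set ℂ}
    {a : Bool × Bool → ℂ} {L : Bool × Bool → Set ℂ} (h : IsLegSystem G en pos B a L)
    (hdisj : ¬ Disjoint (chord a (pairedEdge id false)) (chord a (pairedEdge id true)))
    {H : SimpleGraph (V ⊕ Bool × Bool)} (hH : H ≤ joinAlong G en ⊥)
    (hr : ∀ k, H.Reachable (inr (k, false)) (inr (k, true))) :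
    H.Reachable (inr (false, false)) (inr (true, false)) := by
  have hbot : IsGraphEmbedding (⊥ : SimpleGraph (Bool × Bool)) a fun _ => ∅ :=
    { injective := h.injective
      isArc := fun _ _ hij => hij.elim
      mem_of_pos_mem := fun _ _ _ hw => hw.elim
      exists_of_mem := fun _ _ _ _ _ _ hz => hz.elim }
  have hH' := (h.isGraphEmbedding_joinAlong hbot fun _ _ _ hz => hz.elim).mono hH
  have hnorm (e) (he : e ∈ H.edgeSet) (z : ℂ) (hz : z ∈ joinElim B L (fun _ => ∅) e) :
      1 ≤ ‖z‖ := by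
    rcases mem_edgeSet_joinAlong (edgeSet_mono hH he) with ⟨f, hf, rfl⟩ | ⟨i, rfl⟩ | ⟨f, hf, rfl⟩
    · exact (h.one_lt_norm_of_mem hf (by simpa using hz)).le
    · exact h.one_le_norm_of_mem hz
    · simp at hf
  exact hH'.reachable_of_side_mul_side_neg (v := inr (false, true)) (y := inr (true, true)) hnorm
    (h.norm_eq_one _) (h.norm_eq_one _) (h.norm_eq_one _) (h.norm_eq_one _)
    (side_mul_side_neg_of_not_disjoint h.norm_eq_one h.injective hdisj) (hr false) (hr true)

variable {c : Sym2 (V ⊕ Bool × Bool) → Fin 3}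

theorem IsEdgeColoring.exists_not_reachable_colorSubgraph [Finite V]
    (hc : IsEdgeColoring (joinAlong G en ⊥) c) (x y : Fin 3)
    (hplanar : ∀ H ≤ joinAlong G en ⊥, (∀ k, H.Reachable (inr (k, false)) (inr (k, true))) →
      H.Reachable (inr (false, false)) (inr (true, false))) :
    ∃ k, ¬ (colorSubgraph (joinAlong G en ⊥) c {x, y}).Reachable (inr (k, false))
      (inr (k, true)) := by
  classical
  by_contra! hr
  have := Fintype.ofFinite V
  set K := colorSubgraph (joinAlong G en ⊥) c {x, y}
  have hreach := hplanar K (colorSubgraph_le _) hr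
  have hdeg (v : V ⊕ Bool × Bool) : K.degree v ≤ 2 := by
    rw [hc.degree_colorSubgraph]
    exact (ncard_le_ncard inter_subset_right).trans (ncard_insert_le x {y} |>.trans (by simp))
  have hdeg_inr (i : Bool × Bool) : K.degree (inr i) ≤ 1 := by
    rw [hc.degree_colorSubgraph, incidenceSet_inr, image_singleton]
    exact (ncard_le_ncard inter_subset_left).trans (ncard_singleton _).le
  have := card_le_two_of_reachable hdeg
    (S := {inr (false, false), inr (true, false), inr (true, true)}) (by simp [hdeg_inr])
    (u := inr (true, false)) (by simp [hreach, (hr true).symm])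
  simp at this

theorem IsEdgeColoring.exists_leg_eq [Finite V] (hc : IsEdgeColoring (joinAlong G en ⊥) c)
    (hcubic : ∀ v, ((joinAlong G en ⊥).incidenceSet (inl v)).ncard = 3)
    (hplanar : ∀ H ≤ joinAlong G en ⊥, (∀ k, H.Reachable (inr (k, false)) (inr (k, true))) →
      H.Reachable (inr (false, false)) (inr (true, false))) :
    ∃ c' : Sym2 (V ⊕ Bool × Bool) → Fin 3, IsEdgeColoring (joinAlong G en ⊥) c' ∧
      ∀ k, c' (leg en (k, false)) = c' (leg en (k, true)) := by
  have := Fintype.ofFinite V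
  rcases forall_eq_or_exists_forall_mk_eq (hc.even_card_add_card_leg hcubic) with
    heq | ⟨x, y, -, hlegs⟩
  · exact ⟨c, hc, heq⟩
  set K := colorSubgraph (joinAlong G en ⊥) c {x, y}
  obtain ⟨k, hk⟩ := hc.exists_not_reachable_colorSubgraph x y hplanar
  obtain ⟨c', hc', hswap⟩ := hc.exists_swap (x := x) (y := y)
    (C := {v | K.Reachable (inr (k, false)) v}) fun u v huv hu => hu.trans huv.reachable
  refine ⟨c', hc', ?_⟩
  have hleg (i : Bool × Bool) : leg en i ∈ (joinAlong G en ⊥).incidenceSet (inr i) :=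
    ⟨leg_mem_edgeSet i, Sym2.mem_mk_right _ _⟩
  have hkf := (hswap _ _ (hleg (k, false))).1 .rfl
  have hkt := (hswap _ _ (hleg (k, true))).2 hk
  have heq : c' (leg en (k, false)) = c' (leg en (k, true)) := by
    rw [hkf, hkt]
    rcases Sym2.eq_iff.1 (hlegs k) with ⟨h, h'⟩ | ⟨h, h'⟩ <;> simp [h, h']
  refine (forall_eq_or_exists_forall_mk_eq (hc'.even_card_add_card_leg hcubic)).resolve_right ?_
  rintro ⟨x', y', hne, hlegs'⟩
  have := hlegs' k
  rw [heq] at this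
  rcases Sym2.eq_iff.1 this with ⟨h, h'⟩ | ⟨h, h'⟩
  exacts [hne (h ▸ h'), hne (h' ▸ h)]

theorem IsEdgeColoring.threeEdgeColorable (hmem : ∀ k, pairedEdge en k ∈ G.edgeSet)
    (hinj : Function.Injective (pairedEdge en)) (hc : IsEdgeColoring (splice G en ⊥) c)
    (heq : ∀ k, c (leg en (k, false)) = c (leg en (k, true))) : ThreeEdgeColorable G := by
  let c' : Sym2 V → Fin 3 := Function.extend (pairedEdge en) (fun k => c (leg en (k, false)))
    fun e => c (e.map inl)
  have hc' (v : V) : EqOn (c' ∘ subdividedEdge en) c ((splice G en ⊥).incidenceSet (inl v)) := by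
    intro e he
    rcases mem_incidenceSet_inl.1 he with ⟨f, hf, rfl⟩ | ⟨⟨k, s⟩, -, rfl⟩
    · rw [incidenceSet, edgeSet_deleteEdges] at hf
      simp only [Function.comp_apply, subdividedEdge, joinElim_map_inl]
      exact Function.extend_apply' _ _ _ hf.1.2
    · have hk : c' (pairedEdge en k) = c (leg en (k, false)) := hinj.extend_apply _ _ k
      refine hk.trans ?_
      cases s
      exacts [rfl, heq k]
  refine threeEdgeColorable_iff.2 ⟨c', fun v => ?_⟩
  rw [← (bijOn_subdividedEdge (K := ⊥) hmem hinj v).image_eq]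
  exact ((hc (inl v)).congr (hc' v).symm).image_of_comp

end KempeChains

section OneCrossing

open Set Sum

variable {V : Type*} {G : SimpleGraph V} {en : Bool × Bool → V}

theorem TwoEdgeConnected.splice_circuit (hG : TwoEdgeConnected G) :
    TwoEdgeConnected (splice G en circuit) := by
  obtain ⟨⟨v⟩, hG⟩ := twoEdgeConnected_iff.1 hG
  exact twoEdgeConnected_iff.2 ⟨⟨inl v⟩, isEdgeConnected_splice hG isEdgeConnected_circuit⟩

theorem degree_splice_circuit (hmem : ∀ k, pairedEdge en k ∈ G.edgeSet)
    (hinj : Function.Injective (pairedEdge en)) (hcubic : ∀ v, (G.incidenceSet v).ncard = 3)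
    (x : V ⊕ Bool × Bool) [Fintype ((splice G en circuit).neighborSet x)] :
    (splice G en circuit).degree x = 3 := by
  rw [← ncard_incidenceSet]
  rcases x with v | i
  exacts [(ncard_incidenceSet_splice_inl hmem hinj v).trans (hcubic v),
    ncard_incidenceSet_splice_circuit_inr i]

theorem IsLegSystem.threeEdgeColorable_of_splice_circuit [Finite V] {pos : V → ℂ}
    {B : Sym2 V → Set ℂ} {a : Bool × Bool → ℂ} {L : Bool × Bool → Set ℂ}
    (h : IsLegSystem (G.deleteEdges (range (pairedEdge en))) en pos B a L)
    (hmem : ∀ k, pairedEdge en k ∈ G.edgeSet) (hinj : Function.Injective (pairedEdge en))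
    (hcubic : ∀ v, (G.incidenceSet v).ncard = 3)
    (hdisj : ¬ Disjoint (chord a (pairedEdge id false)) (chord a (pairedEdge id true)))
    (hcol : ThreeEdgeColorable (splice G en circuit)) : ThreeEdgeColorable G := by
  obtain ⟨c, hc⟩ := threeEdgeColorable_iff.1 hcol
  have hle : splice G en ⊥ ≤ splice G en circuit := joinAlong_mono bot_le
  have hcubic' (v : V) : ((splice G en ⊥).incidenceSet (inl v)).ncard = 3 :=
    (ncard_incidenceSet_splice_inl hmem hinj v).trans (hcubic v)
  obtain ⟨c', hc', heq⟩ := (hc.mono hle).exists_leg_eq hcubic' fun H hH hr =>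
    h.reachable_of_reachable hdisj hH hr
  exact hc'.threeEdgeColorable hmem hinj heq

end OneCrossing

/-- Jaeger's theorem, \ref{onecrossing}: assuming the four-colour theorem
(every two-edge-connected cubic planar graph is three-edge-colourable), every
two-edge-connected cubic graph drawn in the plane with exactly one crossing is
three-edge-colourable. -/
theorem onecrossing_three_edge_colourable
    (fourCT : ∀ (W : Type) [Fintype W] (H : SimpleGraph W) [DecidableRel H.Adj],
        (∀ w, H.degree w = 3) → TwoEdgeConnected H → IsPlanarGraph H →
        ThreeEdgeColorable H)
    {V : Type} [Fintype V] (G : SimpleGraph V) [DecidableRel G.Adj]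
    (hcubic : ∀ v, G.degree v = 3)
    (h2ec : TwoEdgeConnected G)
    (hdraw : ∃ d : Drawing G, d.OneCrossing) :
    ThreeEdgeColorable G := by
  classical
  obtain ⟨d, hd⟩ := hdraw
  obtain ⟨en, hmem, hinj, p, A, hspoke⟩ := hd.exists_isSpokeSystem
  obtain ⟨pos, B, a, L, hleg⟩ := hspoke.exists_isLegSystem
  by_cases hdisj : Disjoint (chord a (pairedEdge id false)) (chord a (pairedEdge id true))
  · exact fourCT V G hcubic h2ec (hleg.isPlanarGraph_of_disjoint hinj hdisj)
  have hcubic' (v : V) : (G.incidenceSet v).ncard = 3 := (ncard_incidenceSet v).trans (hcubic v)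
  exact hleg.threeEdgeColorable_of_splice_circuit hmem hinj hcubic' hdisj <|
    fourCT _ (splice G en circuit) (fun x => degree_splice_circuit hmem hinj hcubic' x)
      h2ec.splice_circuit (hleg.isPlanarGraph_splice_circuit hdisj)
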